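/- Let v be a smooth (ℤ³-periodic in space) vector field on ℝ³×ℝ, let g be smooth, let t₀ ∈ ℝ and let f solve the transport equation ∂ₜf + v·∇f = g with f(·,t₀) = f₀. Assume |t − t₀|·‖v‖₁ ≤ 1. Then: (1) for every α ∈ [0,1], ‖f(t)‖_α ≤ C(‖f₀‖_α + ∫_{t₀}^t ‖g(τ)‖_α dτ) for a universal constant C; (2) for every N ≥ 1 and α ∈ [0,1], [f(t)]_N ≤ [f₀]_{N+α} + |t−t₀|[v]_{N+α}[f₀]₁ + ∫_{t₀}^t ([g(τ)]_N + (t−τ)[v]_N [g(τ)]₁) dτ (up to a constant depending on N). Moreover, if Φ(·,t) is the inverse of the flow X of v starting at time t₀ at the identity (i.e. dX/dt = v(X,t), X(x,t₀) = x, and Φ(X(x,t),t) = x), then ‖∇Φ(t) − Id‖₀ ≤ C|t−t₀|[v]₁ and, for every N ≥ 2, [Φ(t)]_N ≤ C_N |t−t₀|[v]_N. -/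

import Mathlib

/-! Along a characteristic `γ' = v(γ)` the solution satisfies `d/dt f(t, γ t) = g(t, γ t)`.
Since `(t - t₀) [v]₁ ≤ 1`, Grönwall backwards in time (`curves_dist`) shows that two
characteristics ending at `x` and `y` stay within distance `e ‖x - y‖`; comparing `f` along
them gives the Hölder estimate (`cA_transport`).

For the higher derivatives, `D^N f` solves a transport equation with forcing `D^N g` plus the
commutator of `D^N` with `v · ∇`. By Leibniz' rule the commutator is a sum of products
`D^(i+1) f · D^(N-i) v` with `0 ≤ i < N`. The Landau inequality `[f]_{k+1}² ≤ 8 [f]_k [f]_{k+2}`,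
applied to both factors, makes these products log-convex in `i` up to a constant, so they are
controlled by the two extreme ones: the commutator is at most
`C ([v]_N [f]_1 + [v]_1 [f]_N)` (`commutator_semiJ`). Grönwall's inequality, used first for
`N = 1` and then for general `N`, yields `semiJ_transport`, with `[f₀]_N` and `[v]_N` on the
right-hand side. Periodicity turns these into Hölder seminorms: for `N ≥ 1` each
`∂ᵢ D^(N-1) f` has mean zero over a period in direction `i`, so `[f]_N` is at most a multiple of
the oscillation of `D^N f` at distance one, hence of `[f]_{N+α}` (`semiJ_le_semiH`).

For the inverse flow, `Φ - id` is periodic, vanishes at `t₀` and is transported by `v` with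
forcing `-v`; the same higher-order estimate applies to it. The equation holds at every point
because each point lies on a trajectory of the flow, by uniqueness of characteristics. -/

noncomputable section

open MeasureTheory Real Set

/-! Basic setup: we model the flat torus `𝕋³ = ℝ³/ℤ³` by working with `ℤ³`-periodic
functions on `ℝ³ = Fin 3 → ℝ`, with the unit cube as fundamental domain. -/

abbrev V3 : Type := Fin 3 → ℝ
abbrev M3 : Type := Fin 3 → Fin 3 → ℝ

/-- The unit cube, a fundamental domain for `𝕋³` (of volume `1`). -/
def cube : Set V3 := {x | ∀ i, x i ∈ Set.Icc (0:ℝ) 1}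

/-- `ℤ³`-periodicity: functions on the torus `𝕋³`. -/
def Per {α : Type*} (f : V3 → α) : Prop :=
  ∀ (x : V3) (n : Fin 3 → ℤ), f (x + fun i => (n i : ℝ)) = f x

/-- Partial derivative in the `i`-th coordinate direction. -/
def pd (f : V3 → ℝ) (i : Fin 3) (x : V3) : ℝ := fderiv ℝ f x (Pi.single i 1)

/-- Divergence of a vector field on `ℝ³`. -/
def divg (u : V3 → V3) (x : V3) : ℝ := ∑ i, pd (fun y => u y i) i x

section Norms
variable {E : Type*} [NormedAddCommGroup E] [NormedSpace ℝ E]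

/-- The spatial `C^j` seminorm `[f]_j` (sup of the `j`-th derivative). -/
def semiJ (j : ℕ) (f : V3 → E) : ℝ := ⨆ x : V3, ‖iteratedFDeriv ℝ j f x‖

/-- The spatial `C^N` norm `‖f‖_N`. -/
def normC (N : ℕ) (f : V3 → E) : ℝ := ∑ j ∈ Finset.range (N+1), semiJ j f

/-- The spatial Hölder seminorm `[f]_{N+α}` (for `α > 0`; at `x = y` the quotient is
junk `0/0 = 0`). -/
def semiH (N : ℕ) (α : ℝ) (f : V3 → E) : ℝ :=
  ⨆ x : V3, ⨆ y : V3, ‖iteratedFDeriv ℝ N f x - iteratedFDeriv ℝ N f y‖ / ‖x - y‖ ^ α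

/-- The spatial Hölder norm `‖f‖_{N+α}`. -/
def normH (N : ℕ) (α : ℝ) (f : V3 → E) : ℝ := normC N f + semiH N α f

/-- `‖f‖_N` for time dependent functions: sup over a time set `S` of spatial `C^N` norms. -/
def tN (S : Set ℝ) (N : ℕ) (f : ℝ → V3 → E) : ℝ := ⨆ t : S, normC N (f t.1)

/-- `‖f‖_{N+α}` for time dependent functions. -/
def tH (S : Set ℝ) (N : ℕ) (α : ℝ) (f : ℝ → V3 → E) : ℝ := ⨆ t : S, normH N α (f t.1)

/-- `[f]_N` for time dependent functions. -/
def tSemiJ (S : Set ℝ) (j : ℕ) (f : ℝ → V3 → E) : ℝ := ⨆ t : S, semiJ j (f t.1)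

/-- `[f]_{N+α}` for time dependent functions. -/
def tSemiH (S : Set ℝ) (N : ℕ) (α : ℝ) (f : ℝ → V3 → E) : ℝ := ⨆ t : S, semiH N α (f t.1)

-- The `C^α` norm `‖f‖_α` for `0 ≤ α ≤ 1` (just the sup norm if `α = 0`).
open Classical in
def cA (α : ℝ) (f : V3 → E) : ℝ := semiJ 0 f + (if α = 0 then 0 else semiH 0 α f)

-- The Hölder norm `‖f‖_r` for a real exponent `r = N + s`, `s ∈ [0,1)`.
open Classical in
def hNormR (r : ℝ) (f : V3 → E) : ℝ :=
  normC ⌊r⌋₊ f + (if r = (⌊r⌋₊ : ℝ) then 0 else semiH ⌊r⌋₊ (r - (⌊r⌋₊ : ℝ)) f)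

/-- Joint smoothness in space and time. -/
def SmoothST (f : ℝ → V3 → E) : Prop :=
  ContDiff ℝ (⊤:ℕ∞) (fun p : ℝ × V3 => f p.1 p.2)

end Norms

/-! Weak solutions of the incompressible Euler equations. -/

/-- `v` is a weak solution of the incompressible Euler equations on `𝕋³ × [0,T]`:
it is continuous, periodic, weakly divergence-free, and satisfies the Euler equations
tested against smooth, divergence-free, periodic test vector fields compactly
supported in time inside `(0,T)`. -/
structure WeakEuler (T : ℝ) (v : ℝ → V3 → V3) : Prop where
  cont : ContinuousOn (fun p : ℝ × V3 => v p.1 p.2) (Set.Icc 0 T ×ˢ Set.univ)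
  per : ∀ t, Per (v t)
  divfree : ∀ ψ : V3 → ℝ, ContDiff ℝ (⊤:ℕ∞) ψ → Per ψ → ∀ t ∈ Set.Icc (0:ℝ) T,
    ∫ x in cube, ∑ i, v t x i * pd ψ i x = 0
  weak : ∀ φ : ℝ → V3 → V3, SmoothST φ → (∀ t, Per (φ t)) →
    (∃ K : Set ℝ, IsCompact K ∧ K ⊆ Set.Ioo 0 T ∧ ∀ t ∉ K, ∀ x, φ t x = 0) →
    (∀ t x, divg (φ t) x = 0) →
    ∫ t in Set.Ioo (0:ℝ) T, ∫ x in cube,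
      ((∑ i, v t x i * deriv (fun s => φ s x i) t)
        + ∑ i, ∑ j, v t x i * v t x j * pd (fun y => φ t y i) j x) = 0

/-- The kinetic energy `e_v(t) = ½∫_{𝕋³} |v(x,t)|² dx`. -/
def energy (v : ℝ → V3 → V3) (t : ℝ) : ℝ := (1/2) * ∫ x in cube, ∑ i, (v t x i)^2

/-- `v` is a smooth (classical) solution of the incompressible Euler equations on
`𝕋³ × [0,T]`, with some smooth periodic pressure. -/
structure SmoothEuler (T : ℝ) (v : ℝ → V3 → V3) : Prop where
  smooth : SmoothST v
  per : ∀ t, Per (v t)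
  divfree : ∀ t x, divg (v t) x = 0
  momentum : ∃ p : ℝ → V3 → ℝ, SmoothST p ∧ (∀ t, Per (p t)) ∧
    ∀ t ∈ Set.Icc (0:ℝ) T, ∀ x k,
      deriv (fun s => v s x k) t + (∑ j, pd (fun y => v t y j * v t y k) j x)
        + pd (p t) k x = 0

/-! The Euler–Reynolds system. -/

/-- The smooth pair `(v,R)` solves the Euler–Reynolds system on `𝕋³ × [0,T]`:
`∂ₜv + div(v ⊗ v) + ∇p = div R`, `div v = 0`, where `p` is the (zero-average) pressure. -/
structure EulerReynolds (T : ℝ) (v : ℝ → V3 → V3) (R : ℝ → V3 → M3) : Prop where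
  smooth_v : SmoothST v
  smooth_R : SmoothST R
  per_v : ∀ t, Per (v t)
  per_R : ∀ t, Per (R t)
  symm_R : ∀ t x i j, R t x i j = R t x j i
  divfree : ∀ t x, divg (v t) x = 0
  momentum : ∃ p : ℝ → V3 → ℝ, SmoothST p ∧ (∀ t, Per (p t)) ∧
    (∀ t, ∫ x in cube, p t x = 0) ∧
    ∀ t ∈ Set.Icc (0:ℝ) T, ∀ x k,
      deriv (fun s => v s x k) t + (∑ j, pd (fun y => v t y j * v t y k) j x)
        + pd (p t) k x
      = ∑ j, pd (fun y => R t y j k) j x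

/-! Parameters of the convex integration scheme. -/

/-- Frequency parameter `λ_q = 2π⌈a^(b^q)⌉`. -/
def lam (a b : ℝ) (q : ℕ) : ℝ := 2 * Real.pi * (⌈a ^ (b ^ q)⌉ : ℝ)

/-- Amplitude parameter `δ_q = λ_q^(-2β)`. -/
def del (a b β : ℝ) (q : ℕ) : ℝ := lam a b q ^ (-(2*β))

/-- `θ_q = δ_{q-1}^{-1/2} λ_{q-1}^{-1-3α}` (for `q ≥ 1`). -/
def theta (a b β α : ℝ) (q : ℕ) : ℝ :=
  del a b β (q-1) ^ (-(1/2 : ℝ)) * lam a b (q-1) ^ (-(1+3*α))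

/-- `τ_q = λ_{q-1}^{-γ} θ_q` for `q ≥ 1`, and `τ_0 = T/15`. -/
def tau (T a b β α γ : ℝ) (q : ℕ) : ℝ :=
  if q = 0 then T/15 else lam a b (q-1) ^ (-γ) * theta a b β α q

/-- Mollification parameter `ℓ_q = δ_{q+1}^{1/2} δ_q^{-1/2} λ_q^{-1-γ/2-3α/2}`. -/
def ell (a b β α γ : ℝ) (q : ℕ) : ℝ :=
  del a b β (q+1) ^ ((1:ℝ)/2) * del a b β q ^ (-(1/2 : ℝ)) * lam a b q ^ (-(1 + γ/2 + 3*α/2))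

/-! Good and bad sets of times. -/

/-- The good set `𝒢 = [0,T] ∖ ℬ`. -/
def goodSet (T : ℝ) (B : Set ℝ) : Set ℝ := Set.Icc 0 T \ B

/-- The "real" bad set `𝓑̂ = {t ∈ [0,T] : dist(t,𝒢) > τ}`. -/
def farBad (T τ : ℝ) (B : Set ℝ) : Set ℝ :=
  {t ∈ Set.Icc (0:ℝ) T | τ < Metric.infDist t (goodSet T B)}

/-- The step-`q` properties (i), (iii), (vi), (vii) of the bad set `ℬ_q` and of the pair
`(v_q, R_q)`; `Cv N` are the universal constants in property (vii). -/
structure StepProps (T a b β α γ : ℝ) (Cv : ℕ → ℝ) (q : ℕ)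
    (v : ℝ → V3 → V3) (R : ℝ → V3 → M3) (B : Set ℝ) : Prop where
  subset : B ⊆ Set.Icc 0 T
  /-- (i) `𝒢₀ = [0,T/3] ∪ [2T/3,T]`. -/
  init : q = 0 → B = Set.Ioo (T/3) (2*T/3)
  /-- (iii) `ℬ_q` is a finite union of disjoint open intervals of length `5τ_q`. -/
  intervals : ∃ F : Finset ℝ,
    (B = ⋃ c ∈ F, Set.Ioo c (c + 5 * tau T a b β α γ q)) ∧
    (F : Set ℝ).Pairwise (fun c d =>
      Disjoint (Set.Ioo c (c + 5 * tau T a b β α γ q))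
        (Set.Ioo d (d + 5 * tau T a b β α γ q)))
  /-- (vi) the Reynolds stress vanishes outside `𝓑̂_q`. -/
  suppR : ∀ t ∈ Set.Icc (0:ℝ) T, t ∉ farBad T (tau T a b β α γ q) B → ∀ x, R t x = 0
  /-- (vii) improved estimates outside `𝓑̂_q` (for `q ≥ 1`). -/
  better : ∀ N : ℕ, 1 ≤ q → ∀ t ∈ Set.Icc (0:ℝ) T, t ∉ farBad T (tau T a b β α γ q) B →
    normC (N+1) (v t) ≤ Cv N * del a b β (q-1) ^ ((1:ℝ)/2) * lam a b (q-1)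
      * ell a b β α γ (q-1) ^ (-(N:ℝ))

/-- The properties (ii), (iv), (v) linking step `q` to step `q+1`. -/
structure LinkProps (T a b β α γ : ℝ) (q : ℕ)
    (vold vnew : ℝ → V3 → V3) (Bold Bnew : Set ℝ) : Prop where
  /-- (ii) `𝒢_q ⊆ 𝒢_{q+1}`. -/
  mono : goodSet T Bold ⊆ goodSet T Bnew
  /-- (iv) `|ℬ_{q+1}| ≤ 10 (τ_{q+1}/θ_{q+1}) |ℬ_q|`. -/
  size : volume Bnew ≤ ENNReal.ofReal (10 * tau T a b β α γ (q+1) / theta a b β α (q+1))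
    * volume Bold
  /-- (v) `v_{q+1} = v_q` on `𝒢_q`. -/
  agree : ∀ t ∈ goodSet T Bold, ∀ x, vnew t x = vold t x

/-- The material derivative `(∂ₜ + v·∇)R` of a matrix-valued field. -/
def matD (v : ℝ → V3 → V3) (R : ℝ → V3 → M3) : ℝ → V3 → M3 :=
  fun t x i j => deriv (fun s => R s x i j) t + ∑ k, v t x k * pd (fun y => R t y i j) k x

/-! Mollification. -/

/-- A standard smooth compactly supported radial nonnegative mollification kernel on `ℝ³`. -/
structure StdKernel (φ : V3 → ℝ) : Prop where
  smooth : ContDiff ℝ (⊤:ℕ∞) φ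
  compSupp : HasCompactSupport φ
  radial : ∀ x y : V3, ‖x‖ = ‖y‖ → φ x = φ y
  nonneg : ∀ x, 0 ≤ φ x
  int_one : ∫ x : V3, φ x = 1

/-- Mollification at scale `ℓ`: `(f ∗ φ_ℓ)(x)` with `φ_ℓ(y) = ℓ⁻³ φ(y/ℓ)`. -/
def mollify {E : Type*} [NormedAddCommGroup E] [NormedSpace ℝ E]
    (φ : V3 → ℝ) (ℓ : ℝ) (f : V3 → E) (x : V3) : E :=
  ∫ y : V3, (ℓ ^ (-(3:ℝ)) * φ (ℓ⁻¹ • y)) • f (x - y)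

/-! ### Spatial derivatives of space-time functions -/

theorem smooth_slice {E : Type} [NormedAddCommGroup E] [NormedSpace ℝ E] {F : ℝ → V3 → E}
    (hF : SmoothST F) (s : ℝ) : ContDiff ℝ (⊤ : ℕ∞) (F s) :=
  hF.comp (contDiff_prodMk_right s)

theorem smooth_time {E : Type} [NormedAddCommGroup E] [NormedSpace ℝ E] {F : ℝ → V3 → E}
    (hF : SmoothST F) (x : V3) : ContDiff ℝ (⊤ : ℕ∞) (fun s => F s x) :=
  hF.comp (contDiff_prodMk_left x)

theorem smooth_fderiv {E : Type} [NormedAddCommGroup E] [NormedSpace ℝ E] {F : ℝ → V3 → E}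
    (hF : SmoothST F) : SmoothST (fun s y => fderiv ℝ (F s) y) := by
  refine ContDiff.fderiv (m := (⊤ : ℕ∞)) (f := fun (p : ℝ × V3) (y : V3) => F p.1 y) ?_
    contDiff_snd (by norm_cast)
  exact ContDiff.comp (f := fun q : (ℝ × V3) × V3 => (q.1.1, q.2)) hF
    (((contDiff_fst.comp contDiff_fst)).prodMk contDiff_snd)

/-- Joint smoothness of the spatial derivatives of any order. -/
theorem smooth_iter : ∀ (N : ℕ) {E : Type} [NormedAddCommGroup E] [NormedSpace ℝ E]
    {F : ℝ → V3 → E}, SmoothST F → SmoothST (fun s y => iteratedFDeriv ℝ N (F s) y) := by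
  intro N
  induction N with
  | zero =>
    intro E _ _ F hF
    simp only [iteratedFDeriv_zero_eq_comp]
    exact (continuousMultilinearCurryFin0 ℝ V3 E).symm.contDiff.comp hF
  | succ N ih =>
    intro E _ _ F hF
    have h := ih (smooth_fderiv hF)
    simp only [SmoothST, iteratedFDeriv_succ_eq_comp_right]
    exact (continuousMultilinearCurryRightEquiv' ℝ N V3 E).symm.contDiff.comp h

theorem hasFDerivAt_slice {E : Type} [NormedAddCommGroup E] [NormedSpace ℝ E] {F : ℝ → V3 → E}
    (hF : SmoothST F) (s : ℝ) (x : V3) :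
    HasFDerivAt (F s) ((fderiv ℝ (fun p : ℝ × V3 => F p.1 p.2) (s, x)).comp
      (ContinuousLinearMap.inr ℝ ℝ V3)) x := by
  have h := (hF.differentiable (by simp)).differentiableAt (x := (s, x)) |>.hasFDerivAt
  exact h.comp (f := fun y : V3 => (s, y)) x (hasFDerivAt_prodMk_right s x)

theorem hasDerivAt_time {E : Type} [NormedAddCommGroup E] [NormedSpace ℝ E] {F : ℝ → V3 → E}
    (hF : SmoothST F) (s : ℝ) (x : V3) :
    HasDerivAt (fun r => F r x) (fderiv ℝ (fun p : ℝ × V3 => F p.1 p.2) (s, x) (1, 0)) s := by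
  have h := (hF.differentiable (by simp)).differentiableAt (x := (s, x)) |>.hasFDerivAt
  have h2 : HasDerivAt (fun r : ℝ => (r, x)) ((1 : ℝ), (0 : V3)) s :=
    (hasDerivAt_id s).prodMk (hasDerivAt_const s x)
  exact h.comp_hasDerivAt (f := fun r : ℝ => (r, x)) s h2

/-- The chain rule along a curve `γ`, with the time and the space contributions separated. -/
theorem hasDerivAt_along {E : Type} [NormedAddCommGroup E] [NormedSpace ℝ E] {F : ℝ → V3 → E}
    (hF : SmoothST F) {γ : ℝ → V3} {w : V3} {s : ℝ} (hγ : HasDerivAt γ w s) :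
    HasDerivAt (fun r => F r (γ r))
      (deriv (fun r => F r (γ s)) s + fderiv ℝ (F s) (γ s) w) s := by
  have h := (hF.differentiable (by simp)).differentiableAt (x := (s, γ s)) |>.hasFDerivAt
  have h2 : HasDerivAt (fun r : ℝ => (r, γ r)) ((1 : ℝ), w) s := (hasDerivAt_id s).prodMk hγ
  have h3 := h.comp_hasDerivAt (f := fun r : ℝ => (r, γ r)) s h2
  rw [(hasDerivAt_time hF s (γ s)).deriv, (hasFDerivAt_slice hF s (γ s)).fderiv]
  refine h3.congr_deriv ?_
  rw [ContinuousLinearMap.comp_apply, ContinuousLinearMap.inr_apply, ← map_add]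
  simp

theorem smooth_deriv {E : Type} [NormedAddCommGroup E] [NormedSpace ℝ E] {F : ℝ → V3 → E}
    (hF : SmoothST F) : SmoothST (fun s y => deriv (fun r => F r y) s) := by
  have h : ContDiff ℝ (⊤ : ℕ∞) (fderiv ℝ (fun p : ℝ × V3 => F p.1 p.2)) :=
    hF.fderiv_right (by norm_cast)
  have h2 := h.clm_apply (contDiff_const (c := ((1 : ℝ), (0 : V3))))
  have e : (fun p : ℝ × V3 => deriv (fun r => F r p.2) p.1)
      = fun p => fderiv ℝ (fun p : ℝ × V3 => F p.1 p.2) p (1, 0) := by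
    funext p
    exact (hasDerivAt_time hF p.1 p.2).deriv
  rw [SmoothST, e]
  exact h2

/-- Time and space derivatives commute, by symmetry of the second derivative on `ℝ × ℝ³`. -/
theorem time_deriv_fderiv {E : Type} [NormedAddCommGroup E] [NormedSpace ℝ E] {F : ℝ → V3 → E}
    (hF : SmoothST F) (s : ℝ) (x : V3) :
    deriv (fun r => fderiv ℝ (F r) x) s
      = fderiv ℝ (fun y => deriv (fun r => F r y) s) x := by
  set Fu : ℝ × V3 → E := fun p => F p.1 p.2 with hFu
  have hd : ContDiff ℝ (⊤ : ℕ∞) (fderiv ℝ Fu) := hF.fderiv_right (by norm_cast)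
  have hdd := (hd.differentiable (by simp)).differentiableAt (x := (s, x)) |>.hasFDerivAt
  have hsymm : IsSymmSndFDerivAt ℝ Fu (s, x) :=
    (ContDiff.contDiffAt hF).isSymmSndFDerivAt (by
      rw [minSmoothness_of_isRCLikeNormedField]; exact WithTop.coe_le_coe.2 le_top)
  have h1 : HasDerivAt (fun r : ℝ => (r, x)) ((1 : ℝ), (0 : V3)) s :=
    (hasDerivAt_id s).prodMk (hasDerivAt_const s x)
  have h2 := hdd.comp_hasDerivAt (f := fun r : ℝ => (r, x)) s h1
  have h3 : HasFDerivAt (fun y => fderiv ℝ Fu (s, y))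
      ((fderiv ℝ (fderiv ℝ Fu) (s, x)).comp (ContinuousLinearMap.inr ℝ ℝ V3)) x :=
    hdd.comp (f := fun y : V3 => (s, y)) x (hasFDerivAt_prodMk_right s x)
  have h4 : HasDerivAt (fun r => (fderiv ℝ Fu (r, x)).comp (ContinuousLinearMap.inr ℝ ℝ V3))
      ((fderiv ℝ (fderiv ℝ Fu) (s, x) (1, 0)).comp (ContinuousLinearMap.inr ℝ ℝ V3)) s := by
    have := h2.clm_comp (hasDerivAt_const s (ContinuousLinearMap.inr ℝ ℝ V3))
    simpa using this
  have h5 := h3.clm_apply (hasFDerivAt_const ((1 : ℝ), (0 : V3)) x)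
  have e1 : (fun r => fderiv ℝ (F r) x)
      = fun r => (fderiv ℝ Fu (r, x)).comp (ContinuousLinearMap.inr ℝ ℝ V3) := by
    funext r; exact (hasFDerivAt_slice hF r x).fderiv
  have e2 : (fun y => deriv (fun r => F r y) s) = fun y => fderiv ℝ Fu (s, y) (1, 0) := by
    funext y; exact (hasDerivAt_time hF s y).deriv
  rw [e1, e2, h4.deriv, h5.fderiv]
  ext w
  simpa using hsymm (1, 0) (0, w)

/-- The time derivative commutes with spatial derivatives of every order. -/
theorem time_deriv_iter : ∀ (N : ℕ) {E : Type} [NormedAddCommGroup E] [NormedSpace ℝ E]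
    {F : ℝ → V3 → E}, SmoothST F → ∀ (s : ℝ) (x : V3),
    deriv (fun r => iteratedFDeriv ℝ N (F r) x) s
      = iteratedFDeriv ℝ N (fun y => deriv (fun r => F r y) s) x := by
  intro N
  induction N with
  | zero =>
    intro E _ _ F hF s x
    simp only [iteratedFDeriv_zero_eq_comp, Function.comp_apply]
    have h := ((smooth_time hF x).differentiable (by simp)).differentiableAt (x := s)
    exact ((continuousMultilinearCurryFin0 ℝ V3 E).symm.toContinuousLinearEquiv.toContinuousLinearMap.hasFDerivAt.comp_hasDerivAt s
      h.hasDerivAt).deriv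
  | succ N ih =>
    intro E _ _ F hF s x
    have h := ih (smooth_fderiv hF) s x
    simp only [iteratedFDeriv_succ_eq_comp_right, Function.comp_apply]
    have hd := ((smooth_time (smooth_iter N (smooth_fderiv hF)) x).differentiable
      (by simp)).differentiableAt (x := s)
    have hc := ((continuousMultilinearCurryRightEquiv' ℝ N V3
      E).symm.toContinuousLinearEquiv.toContinuousLinearMap.hasFDerivAt.comp_hasDerivAt s
      hd.hasDerivAt).deriv
    refine hc.trans ?_
    rw [h]
    simp only [time_deriv_fderiv hF]
    rfl

/-! ### Suprema of periodic functions -/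

theorem isCompact_cube : IsCompact cube := by
  have : cube = Set.Icc (0 : V3) 1 := by
    ext x
    simp only [cube, Set.mem_ofPred_eq, Set.mem_Icc, Pi.le_def, Pi.zero_apply, Pi.one_apply]
    exact forall_and
  rw [this]
  exact isCompact_Icc

theorem exists_cube (x : V3) : ∃ n : Fin 3 → ℤ, (x + fun i => (n i : ℝ)) ∈ cube := by
  refine ⟨fun i => -⌊x i⌋, fun i => ?_⟩
  simp only [Pi.add_apply, Int.cast_neg, Set.mem_Icc]
  constructor
  · linarith [Int.floor_le (x i)]
  · linarith [Int.lt_floor_add_one (x i)]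

theorem range_eq_image_cube {β : Type*} {h : V3 → β} (hp : Per h) : Set.range h = h '' cube := by
  ext b
  constructor
  · rintro ⟨x, rfl⟩
    obtain ⟨n, hn⟩ := exists_cube x
    exact ⟨_, hn, hp x n⟩
  · rintro ⟨x, -, rfl⟩
    exact ⟨x, rfl⟩

theorem per_iter {E : Type} [NormedAddCommGroup E] [NormedSpace ℝ E] {f : V3 → E} (hp : Per f)
    (N : ℕ) : Per (iteratedFDeriv ℝ N f) := by
  intro x n
  rw [← iteratedFDeriv_comp_add_right]
  congr 1
  funext z
  exact hp z n

section
variable {E : Type} [NormedAddCommGroup E] [NormedSpace ℝ E] {F : ℝ → V3 → E}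

theorem cont_iter (hF : SmoothST F) (N : ℕ) :
    Continuous (fun p : ℝ × V3 => iteratedFDeriv ℝ N (F p.1) p.2) :=
  ContDiff.continuous (smooth_iter N hF)

theorem bdd_iter (hF : SmoothST F) (hp : ∀ t, Per (F t)) (N : ℕ) (s : ℝ) :
    BddAbove (Set.range fun x => ‖iteratedFDeriv ℝ N (F s) x‖) := by
  have h : Per (fun x => ‖iteratedFDeriv ℝ N (F s) x‖) := fun x n => by
    simp only [per_iter (hp s) N x n]
  rw [range_eq_image_cube h]
  refine (isCompact_cube.image ?_).bddAbove
  exact ((cont_iter hF N).comp (Continuous.prodMk_right s)).norm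

theorem le_semiJ (hF : SmoothST F) (hp : ∀ t, Per (F t)) (N : ℕ) (s : ℝ) (x : V3) :
    ‖iteratedFDeriv ℝ N (F s) x‖ ≤ semiJ N (F s) :=
  le_ciSup (bdd_iter hF hp N s) x

theorem semiJ_nonneg (N : ℕ) (f : V3 → E) : 0 ≤ semiJ N f :=
  Real.iSup_nonneg fun _ => norm_nonneg _

theorem semiJ_le {N : ℕ} {f : V3 → E} {c : ℝ} (h : ∀ x, ‖iteratedFDeriv ℝ N f x‖ ≤ c) :
    semiJ N f ≤ c := ciSup_le h

theorem semiJ_continuous (hF : SmoothST F) (hp : ∀ t, Per (F t)) (N : ℕ) :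
    Continuous fun s => semiJ N (F s) := by
  have e : (fun s => semiJ N (F s))
      = fun s => sSup ((fun x => ‖iteratedFDeriv ℝ N (F s) x‖) '' cube) := by
    funext s
    rw [← range_eq_image_cube (h := fun x => ‖iteratedFDeriv ℝ N (F s) x‖)]
    · rfl
    · intro x n
      simp only [per_iter (hp s) N x n]
  rw [e]
  refine isCompact_cube.continuous_sSup (f := fun s x => ‖iteratedFDeriv ℝ N (F s) x‖) ?_
  exact (cont_iter hF N).norm

theorem le_iSup_Icc {φ : ℝ → ℝ} {ψ : ℝ → ℝ} (hψ : Continuous ψ) (h : ∀ s, φ s ≤ ψ s) {a b s : ℝ}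
    (hs : s ∈ Set.Icc a b) : φ s ≤ ⨆ r : Set.Icc a b, φ r.1 := by
  obtain ⟨M, hM⟩ := (isCompact_Icc.image (s := Set.Icc a b) hψ).bddAbove
  refine le_ciSup (f := fun r : Set.Icc a b => φ r.1) ⟨M, ?_⟩ ⟨s, hs⟩
  rintro _ ⟨r, rfl⟩
  exact (h r).trans (hM ⟨r.1, r.2, rfl⟩)

theorem le_tSemiJ (hF : SmoothST F) (hp : ∀ t, Per (F t)) (N : ℕ) {a b s : ℝ}
    (hs : s ∈ Set.Icc a b) : semiJ N (F s) ≤ tSemiJ (Set.Icc a b) N F :=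
  le_iSup_Icc (semiJ_continuous hF hp N) (fun _ => le_rfl) hs

theorem tSemiJ_nonneg (N : ℕ) (S : Set ℝ) (F : ℝ → V3 → E) : 0 ≤ tSemiJ S N F :=
  Real.iSup_nonneg fun _ => semiJ_nonneg _ _

theorem tSemiJ_one_le_tN (hF : SmoothST F) (hp : ∀ t, Per (F t)) {a b : ℝ} (hab : a ≤ b) :
    tSemiJ (Set.Icc a b) 1 F ≤ tN (Set.Icc a b) 1 F := by
  have hne : Nonempty (Set.Icc a b) := ⟨⟨a, le_rfl, hab⟩⟩
  refine ciSup_le fun s => ?_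
  have hc : Continuous fun s => normC 1 (F s) := by
    simp only [normC]
    exact continuous_finsetSum _ fun j _ => semiJ_continuous hF hp j
  refine le_trans ?_ (le_iSup_Icc hc (fun _ => le_rfl) s.2)
  simp only [normC, Finset.sum_range_succ, Finset.sum_range_zero, zero_add]
  linarith [semiJ_nonneg 0 (F s)]

theorem hasFDerivAt_iter (hF : SmoothST F) (N : ℕ) (s : ℝ) (x : V3) :
    HasFDerivAt (iteratedFDeriv ℝ N (F s)) (fderiv ℝ (iteratedFDeriv ℝ N (F s)) x) x :=
  (((smooth_slice (smooth_iter N hF) s).differentiable (by simp)) x).hasFDerivAt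

theorem norm_fderiv_iter_sub {f : V3 → E} (N : ℕ) (x y : V3) :
    ‖fderiv ℝ (iteratedFDeriv ℝ N f) x - fderiv ℝ (iteratedFDeriv ℝ N f) y‖
      = ‖iteratedFDeriv ℝ (N + 1) f x - iteratedFDeriv ℝ (N + 1) f y‖ := by
  rw [fderiv_iteratedFDeriv]
  simp only [Function.comp_apply]
  let e := continuousMultilinearCurryLeftEquiv ℝ (fun _ : Fin (N + 1) => V3) E
  exact (congrArg norm (e.map_sub _ _)).symm.trans (e.norm_map _)

theorem iter_lipschitz (hF : SmoothST F) (hp : ∀ t, Per (F t)) (N : ℕ) (s : ℝ) (x y : V3) :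
    ‖iteratedFDeriv ℝ N (F s) x - iteratedFDeriv ℝ N (F s) y‖
      ≤ semiJ (N + 1) (F s) * ‖x - y‖ := by
  refine Convex.norm_image_sub_le_of_norm_hasFDerivWithin_le (s := Set.univ)
    (fun z _ => (hasFDerivAt_iter hF N s z).hasFDerivWithinAt) (fun z _ => ?_) convex_univ
    (Set.mem_univ _) (Set.mem_univ _)
  rw [norm_fderiv_iteratedFDeriv]
  exact le_semiJ hF hp _ s z

theorem iter_zero_sub (f : V3 → E) (x y : V3) :
    ‖iteratedFDeriv ℝ 0 f x - iteratedFDeriv ℝ 0 f y‖ = ‖f x - f y‖ := by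
  simp only [iteratedFDeriv_zero_eq_comp, Function.comp_apply]
  rw [← map_sub, LinearIsometryEquiv.norm_map]

theorem lipschitz_slice (hF : SmoothST F) (hp : ∀ t, Per (F t)) (s : ℝ) (x y : V3) :
    ‖F s x - F s y‖ ≤ semiJ 1 (F s) * ‖x - y‖ := by
  rw [← iter_zero_sub]
  exact iter_lipschitz hF hp 0 s x y

/-! ### Hölder seminorms -/

theorem quot_le (hF : SmoothST F) (hp : ∀ t, Per (F t)) (N : ℕ) {α : ℝ} (h0 : 0 ≤ α) (h1 : α ≤ 1)
    (s : ℝ) (x y : V3) :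
    ‖iteratedFDeriv ℝ N (F s) x - iteratedFDeriv ℝ N (F s) y‖ / ‖x - y‖ ^ α
      ≤ 2 * semiJ N (F s) + semiJ (N + 1) (F s) := by
  have hN := semiJ_nonneg N (F s)
  have hN1 := semiJ_nonneg (N + 1) (F s)
  rcases eq_or_ne x y with rfl | hxy
  · simp; positivity
  have hpos : 0 < ‖x - y‖ := norm_pos_iff.2 (sub_ne_zero.2 hxy)
  rw [div_le_iff₀ (Real.rpow_pos_of_pos hpos α)]
  rcases le_total ‖x - y‖ 1 with h | h
  · have ha : ‖x - y‖ ≤ ‖x - y‖ ^ α := by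
      simpa using Real.rpow_le_rpow_of_exponent_ge hpos h h1
    calc _ ≤ semiJ (N + 1) (F s) * ‖x - y‖ := iter_lipschitz hF hp N s x y
      _ ≤ (2 * semiJ N (F s) + semiJ (N + 1) (F s)) * ‖x - y‖ ^ α := by
        gcongr; linarith
  · have ha : 1 ≤ ‖x - y‖ ^ α := Real.one_le_rpow h h0
    calc _ ≤ ‖iteratedFDeriv ℝ N (F s) x‖ + ‖iteratedFDeriv ℝ N (F s) y‖ := norm_sub_le _ _
      _ ≤ (2 * semiJ N (F s) + semiJ (N + 1) (F s)) * 1 := by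
        linarith [le_semiJ hF hp N s x, le_semiJ hF hp N s y]
      _ ≤ _ := by gcongr

theorem bdd_quot_inner (hF : SmoothST F) (hp : ∀ t, Per (F t)) (N : ℕ) {α : ℝ} (h0 : 0 ≤ α)
    (h1 : α ≤ 1) (s : ℝ) (x : V3) : BddAbove (Set.range fun y =>
    ‖iteratedFDeriv ℝ N (F s) x - iteratedFDeriv ℝ N (F s) y‖ / ‖x - y‖ ^ α) :=
  ⟨_, by rintro _ ⟨y, rfl⟩; exact quot_le hF hp N h0 h1 s x y⟩

theorem bdd_quot_outer (hF : SmoothST F) (hp : ∀ t, Per (F t)) (N : ℕ) {α : ℝ} (h0 : 0 ≤ α)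
    (h1 : α ≤ 1) (s : ℝ) : BddAbove (Set.range fun x => ⨆ y,
    ‖iteratedFDeriv ℝ N (F s) x - iteratedFDeriv ℝ N (F s) y‖ / ‖x - y‖ ^ α) :=
  ⟨_, by rintro _ ⟨x, rfl⟩; exact ciSup_le fun y => quot_le hF hp N h0 h1 s x y⟩

theorem semiH_nonneg (N : ℕ) (α : ℝ) (f : V3 → E) : 0 ≤ semiH N α f :=
  Real.iSup_nonneg fun _ => Real.iSup_nonneg fun _ => by positivity

theorem semiH_le_semiJ (hF : SmoothST F) (hp : ∀ t, Per (F t)) (N : ℕ) {α : ℝ} (h0 : 0 ≤ α)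
    (h1 : α ≤ 1) (s : ℝ) : semiH N α (F s) ≤ 2 * semiJ N (F s) + semiJ (N + 1) (F s) :=
  ciSup_le fun x => ciSup_le fun y => quot_le hF hp N h0 h1 s x y

theorem le_semiH (hF : SmoothST F) (hp : ∀ t, Per (F t)) (N : ℕ) {α : ℝ} (h0 : 0 ≤ α)
    (h1 : α ≤ 1) (s : ℝ) (x y : V3) :
    ‖iteratedFDeriv ℝ N (F s) x - iteratedFDeriv ℝ N (F s) y‖ ≤ semiH N α (F s) * ‖x - y‖ ^ α := by
  rcases eq_or_ne x y with rfl | hxy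
  · simp only [sub_self, norm_zero]
    exact mul_nonneg (semiH_nonneg _ _ _) (Real.rpow_nonneg le_rfl _)
  have hpos : 0 < ‖x - y‖ := norm_pos_iff.2 (sub_ne_zero.2 hxy)
  rw [← div_le_iff₀ (Real.rpow_pos_of_pos hpos α)]
  exact (le_ciSup (bdd_quot_inner hF hp N h0 h1 s x) y).trans
    (le_ciSup (bdd_quot_outer hF hp N h0 h1 s) x)

theorem le_tSemiH (hF : SmoothST F) (hp : ∀ t, Per (F t)) (N : ℕ) {α : ℝ} (h0 : 0 ≤ α)
    (h1 : α ≤ 1) {a b s : ℝ} (hs : s ∈ Set.Icc a b) :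
    semiH N α (F s) ≤ tSemiH (Set.Icc a b) N α F := by
  refine le_iSup_Icc (φ := fun s => semiH N α (F s))
    (ψ := fun s => 2 * semiJ N (F s) + semiJ (N + 1) (F s)) ?_
    (fun s => semiH_le_semiJ hF hp N h0 h1 s) hs
  exact ((semiJ_continuous hF hp N).const_mul 2).add (semiJ_continuous hF hp (N + 1))

/-- In time, the Hölder seminorm is a supremum of continuous functions, hence lower
semicontinuous; this makes the time integrals of Hölder norms genuine integrals. -/
theorem semiH_measurable (hF : SmoothST F) (hp : ∀ t, Per (F t)) (N : ℕ) {α : ℝ} (h0 : 0 ≤ α)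
    (h1 : α ≤ 1) : Measurable fun s => semiH N α (F s) := by
  refine LowerSemicontinuous.measurable ?_
  refine lowerSemicontinuous_ciSup (fun s => bdd_quot_outer hF hp N h0 h1 s) fun x => ?_
  refine lowerSemicontinuous_ciSup (fun s => bdd_quot_inner hF hp N h0 h1 s x) fun y => ?_
  refine Continuous.lowerSemicontinuous ?_
  refine Continuous.div_const ?_ _
  exact (((cont_iter hF N).comp (Continuous.prodMk_left x)).sub
    ((cont_iter hF N).comp (Continuous.prodMk_left y))).norm

theorem semiH_intervalIntegrable (hF : SmoothST F) (hp : ∀ t, Per (F t)) (N : ℕ) {α : ℝ}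
    (h0 : 0 ≤ α) (h1 : α ≤ 1) (a b : ℝ) :
    IntervalIntegrable (fun s => semiH N α (F s)) volume a b := by
  have hc : Continuous fun s => 2 * semiJ N (F s) + semiJ (N + 1) (F s) :=
    ((semiJ_continuous hF hp N).const_mul 2).add (semiJ_continuous hF hp (N + 1))
  refine (hc.intervalIntegrable a b).mono_fun
    (semiH_measurable hF hp N h0 h1).aestronglyMeasurable (Filter.Eventually.of_forall fun s => ?_)
  have := semiH_le_semiJ hF hp N h0 h1 s
  have h2 := semiH_nonneg N α (F s)
  beta_reduce
  rw [Real.norm_of_nonneg h2, Real.norm_of_nonneg (h2.trans this)]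
  exact this

theorem norm_apply_le_sum {G : Type} [NormedAddCommGroup G] [NormedSpace ℝ G] (φ : V3 →L[ℝ] G)
    {c : ℝ} (hc : 0 ≤ c) (h : ∀ i, ‖φ (Pi.single i 1)‖ ≤ c) : ‖φ‖ ≤ 3 * c := by
  refine ContinuousLinearMap.opNorm_le_bound _ (by positivity) fun w => ?_
  have e : w = ∑ i, w i • (Pi.single i (1 : ℝ) : V3) := by
    ext j; simp [Finset.sum_apply, Pi.single_apply]
  calc ‖φ w‖ = ‖∑ i, w i • φ (Pi.single i 1)‖ := by
        conv_lhs => rw [e]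
        simp only [map_sum, map_smul]
    _ ≤ ∑ i, ‖w i • φ (Pi.single i 1)‖ := norm_sum_le _ _
    _ ≤ ∑ _i : Fin 3, ‖w‖ * c := by
        refine Finset.sum_le_sum fun i _ => ?_
        rw [norm_smul]
        exact mul_le_mul (norm_le_pi_norm w i) (h i) (norm_nonneg _) (norm_nonneg _)
    _ = 3 * c * ‖w‖ := by simp; ring

/-- A Poincaré-type inequality: the `i`-th partial derivative of the periodic function
`D^(N-1) F` has mean zero over a period in direction `i`, so it is bounded by its oscillation at
distance one. The factor `3` is the number of coordinate directions. -/
theorem semiJ_le_semiH (hF : SmoothST F) (hp : ∀ t, Per (F t)) {N : ℕ} (hN : 1 ≤ N) {α : ℝ}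
    (h0 : 0 ≤ α) (h1 : α ≤ 1) (s : ℝ) : semiJ N (F s) ≤ 3 * semiH N α (F s) := by
  obtain ⟨n, rfl⟩ : ∃ n, N = n + 1 := ⟨N - 1, by omega⟩
  refine semiJ_le fun x => ?_
  rw [← norm_fderiv_iteratedFDeriv]
  refine norm_apply_le_sum _ (semiH_nonneg _ _ _) fun i => ?_
  have hball : ∀ y ∈ Metric.closedBall x 1,
      ‖fderiv ℝ (iteratedFDeriv ℝ n (F s)) y - fderiv ℝ (iteratedFDeriv ℝ n (F s)) x‖
        ≤ semiH (n + 1) α (F s) := by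
    intro y hy
    rw [norm_fderiv_iter_sub]
    refine (le_semiH hF hp (n + 1) h0 h1 s y x).trans ?_
    have : ‖y - x‖ ^ α ≤ 1 :=
      Real.rpow_le_one (norm_nonneg _) (by simpa [dist_eq_norm] using hy) h0
    nlinarith [semiH_nonneg (n + 1) α (F s)]
  have hnorm : ‖(Pi.single i (1 : ℝ) : V3)‖ = 1 := by
    rw [Pi.norm_single]; simp
  have h := Convex.norm_image_sub_le_of_norm_hasFDerivWithin_le' (x := x)
    (y := x + Pi.single i 1) (s := Metric.closedBall x 1)
    (fun z _ => (hasFDerivAt_iter hF n s z).hasFDerivWithinAt) hball (convex_closedBall x 1)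
    (Metric.mem_closedBall_self zero_le_one) (by simp [dist_eq_norm, hnorm])
  have hper := per_iter (hp s) n x (Pi.single i 1)
  have e : (fun j => (((Pi.single i 1 : Fin 3 → ℤ) j : ℤ) : ℝ)) = (Pi.single i (1 : ℝ) : V3) := by
    ext j
    rcases eq_or_ne j i with rfl | hj
    · simp
    · simp [hj]
  rw [e] at hper
  rw [hper, add_sub_cancel_left, hnorm, sub_self, zero_sub, norm_neg, mul_one] at h
  exact h

theorem tSemiJ_le_tSemiH (hF : SmoothST F) (hp : ∀ t, Per (F t)) {N : ℕ} (hN : 1 ≤ N) {α : ℝ}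
    (h0 : 0 ≤ α) (h1 : α ≤ 1) {a b : ℝ} (hab : a ≤ b) :
    tSemiJ (Set.Icc a b) N F ≤ 3 * tSemiH (Set.Icc a b) N α F := by
  have hne : Nonempty (Set.Icc a b) := ⟨⟨a, le_rfl, hab⟩⟩
  refine ciSup_le fun s => ?_
  exact (semiJ_le_semiH hF hp hN h0 h1 s).trans
    (mul_le_mul_of_nonneg_left (le_tSemiH hF hp N h0 h1 s.2) (by norm_num))

end

/-! ### Characteristics -/

section
variable {v : ℝ → V3 → V3}

theorem lipschitz_on (hv : SmoothST v) (hp : ∀ t, Per (v t)) {a b s : ℝ} (hs : s ∈ Set.Icc a b)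
    (x y : V3) : ‖v s x - v s y‖ ≤ tSemiJ (Set.Icc a b) 1 v * ‖x - y‖ :=
  (lipschitz_slice hv hp s x y).trans
    (mul_le_mul_of_nonneg_right (le_tSemiJ hv hp 1 hs) (norm_nonneg _))

theorem lipschitzOnWith_on (hv : SmoothST v) (hp : ∀ t, Per (v t)) {a b s : ℝ}
    (hs : s ∈ Set.Icc a b) (S : Set V3) :
    LipschitzOnWith (Real.toNNReal (tSemiJ (Set.Icc a b) 1 v)) (v s) S := by
  refine LipschitzOnWith.of_dist_le_mul fun x _ y _ => ?_
  rw [dist_eq_norm, dist_eq_norm, Real.coe_toNNReal _ (tSemiJ_nonneg _ _ _)]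
  exact lipschitz_on hv hp hs x y

/-- Characteristics exist on any time interval: `v` is bounded and Lipschitz uniformly in
space, so a single application of Picard–Lindelöf covers the whole interval. -/
theorem exists_curve (hv : SmoothST v) (hp : ∀ t, Per (v t)) {a b s : ℝ} (hs : s ∈ Set.Icc a b)
    (x : V3) : ∃ γ : ℝ → V3, γ s = x ∧ ∀ r ∈ Set.Icc a b, HasDerivAt γ (v r (γ r)) r := by
  have hs' : s ∈ Set.Icc (a - 1) (b + 1) := ⟨by linarith [hs.1], by linarith [hs.2]⟩
  set L : ℝ := tSemiJ (Set.Icc (a - 1) (b + 1)) 0 v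
  have hL : 0 ≤ L := tSemiJ_nonneg _ _ _
  have hm : 0 ≤ max (b + 1 - s) (s - (a - 1)) := le_max_of_le_left (by linarith [hs.2])
  have hPL : IsPicardLindelof v (tmin := a - 1) (tmax := b + 1) ⟨s, hs'⟩ x
      (Real.toNNReal (L * max (b + 1 - s) (s - (a - 1)))) 0 (Real.toNNReal L)
      (Real.toNNReal (tSemiJ (Set.Icc (a - 1) (b + 1)) 1 v)) := by
    refine ⟨fun r hr => lipschitzOnWith_on hv hp hr _, fun y _ => ?_, fun r hr y _ => ?_, ?_⟩
    · exact (smooth_time hv y).continuous.continuousOn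
    · rw [Real.coe_toNNReal _ hL, ← norm_iteratedFDeriv_zero (𝕜 := ℝ)]
      exact (le_semiJ hv hp 0 r y).trans (le_tSemiJ hv hp 0 hr)
    · rw [Real.coe_toNNReal _ hL, Real.coe_toNNReal _ (mul_nonneg hL hm)]
      simp
  obtain ⟨γ, hγ, hd⟩ := hPL.exists_eq_forall_mem_Icc_hasDerivWithinAt₀
  refine ⟨γ, hγ, fun r hr => ?_⟩
  refine (hd r ⟨by linarith [hr.1], by linarith [hr.2]⟩).hasDerivAt ?_
  exact Icc_mem_nhds (by linarith [hr.1]) (by linarith [hr.2])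

/-- Grönwall backwards in time: characteristics separate at most exponentially. -/
theorem curves_dist (hv : SmoothST v) (hp : ∀ t, Per (v t)) {a b : ℝ} {γ δ : ℝ → V3}
    (hγ : ∀ r ∈ Set.Icc a b, HasDerivAt γ (v r (γ r)) r)
    (hδ : ∀ r ∈ Set.Icc a b, HasDerivAt δ (v r (δ r)) r) {r : ℝ} (hr : r ∈ Set.Icc a b) :
    ‖γ r - δ r‖ ≤ ‖γ b - δ b‖ * Real.exp (tSemiJ (Set.Icc a b) 1 v * (b - r)) := by
  have hrev : ∀ s, HasDerivAt (fun s : ℝ => a + b - s) (-1) s := fun s => by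
    simpa using (hasDerivAt_id s).const_sub (a + b)
  have hmem : ∀ s ∈ Set.Icc a b, a + b - s ∈ Set.Icc a b := fun s hs =>
    ⟨by linarith [hs.2], by linarith [hs.1]⟩
  have key : ∀ η : ℝ → V3, (∀ r ∈ Set.Icc a b, HasDerivAt η (v r (η r)) r) →
      ∀ s ∈ Set.Icc a b, HasDerivAt (fun s => η (a + b - s))
        ((fun s x => -v (a + b - s) x) s (η (a + b - s))) s := by
    intro η hη s hs
    have h := (hη _ (hmem s hs)).scomp s (hrev s)
    rw [neg_one_smul] at h
    exact h
  have h := dist_le_of_trajectories_ODE_of_mem (v := fun s x => -v (a + b - s) x)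
    (s := fun _ => Set.univ) (K := Real.toNNReal (tSemiJ (Set.Icc a b) 1 v))
    (f := fun s => γ (a + b - s)) (g := fun s => δ (a + b - s)) (a := a) (b := b)
    (δ := ‖γ b - δ b‖) ?_
    (fun s hs => (key γ hγ s hs).continuousAt.continuousWithinAt)
    (fun s hs => (key γ hγ s ⟨hs.1, hs.2.le⟩).hasDerivWithinAt) (fun _ _ => Set.mem_univ _)
    (fun s hs => (key δ hδ s hs).continuousAt.continuousWithinAt)
    (fun s hs => (key δ hδ s ⟨hs.1, hs.2.le⟩).hasDerivWithinAt) (fun _ _ => Set.mem_univ _)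
    (by simp [dist_eq_norm]) (a + b - r) (hmem r hr)
  · rw [Real.coe_toNNReal _ (tSemiJ_nonneg _ _ _), dist_eq_norm] at h
    rw [show a + b - (a + b - r) = r by ring, show a + b - r - a = b - r by ring] at h
    exact h
  · intro s hs
    exact (lipschitzOnWith_on hv hp (hmem s ⟨hs.1, hs.2.le⟩) _).neg

end

section
variable {E : Type} [NormedAddCommGroup E] [NormedSpace ℝ E] {v : ℝ → V3 → V3} {f g : ℝ → V3 → E}

theorem deriv_along (hf : SmoothST f)
    (heq : ∀ s x, deriv (fun r => f r x) s + fderiv ℝ (f s) x (v s x) = g s x)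
    {γ : ℝ → V3} {s : ℝ} (hγ : HasDerivAt γ (v s (γ s)) s) :
    HasDerivAt (fun r => f r (γ r)) (g s (γ s)) s := by
  rw [← heq]
  exact hasDerivAt_along hf hγ

/-! ### The commutator of `D^N` with the transport operator -/

/-- The derivative of `D^N f` in a fixed direction is `D^N` of the directional derivative. -/
theorem fderiv_iter_apply {f : V3 → E} (hf : ContDiff ℝ (⊤ : ℕ∞) f) (N : ℕ) (x w : V3) :
    fderiv ℝ (iteratedFDeriv ℝ N f) x w = iteratedFDeriv ℝ N (fun y => fderiv ℝ f y w) x := by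
  -- Translations `f (y + s • w)` turn the spatial directional derivative into a time derivative.
  have hF : SmoothST (fun (s : ℝ) (y : V3) => f (y + s • w)) :=
    hf.comp (contDiff_snd.add (contDiff_fst.smul contDiff_const))
  have h := time_deriv_iter N hF 0 x
  have hline : ∀ y : V3, HasDerivAt (fun s : ℝ => y + s • w) w 0 := fun y => by
    simpa using ((hasDerivAt_id (0 : ℝ)).smul_const w).const_add y
  have hdf : ∀ y, HasDerivAt (fun s : ℝ => f (y + s • w)) (fderiv ℝ f y w) 0 := fun y => by
    have := ((hf.differentiable (by simp)) (y + (0 : ℝ) • w)).hasFDerivAt.comp_hasDerivAt 0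
      (hline y)
    simp only [zero_smul, add_zero] at this
    exact this
  have hsm : ContDiff ℝ 1 (iteratedFDeriv ℝ N f) :=
    hf.iteratedFDeriv_right (by exact_mod_cast le_top)
  have hdN : HasDerivAt (fun s : ℝ => iteratedFDeriv ℝ N f (x + s • w))
      (fderiv ℝ (iteratedFDeriv ℝ N f) x w) 0 := by
    have := ((hsm.differentiable (by simp)) (x + (0 : ℝ) • w)).hasFDerivAt.comp_hasDerivAt 0
      (hline x)
    simp only [zero_smul, add_zero] at this
    exact this
  simp only [iteratedFDeriv_comp_add_right] at h
  rw [hdN.deriv] at h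
  rw [h]
  congr 1
  funext y
  exact (hdf y).deriv

/-- Leibniz' rule applied to `v - v x`, whose value at `x` vanishes, removes exactly the
top-order term `v · ∇ D^N f`. -/
theorem commutator_le {f : V3 → E} {v : V3 → V3} (hf : ContDiff ℝ (⊤ : ℕ∞) f)
    (hv : ContDiff ℝ (⊤ : ℕ∞) v) (N : ℕ) (x : V3) :
    ‖fderiv ℝ (iteratedFDeriv ℝ N f) x (v x) - iteratedFDeriv ℝ N (fun y => fderiv ℝ f y (v y)) x‖
      ≤ ∑ i ∈ Finset.range N, (N.choose i : ℝ) * ‖iteratedFDeriv ℝ (i + 1) f x‖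
          * ‖iteratedFDeriv ℝ (N - i) v x‖ := by
  have hdf : ContDiff ℝ (⊤ : ℕ∞) (fderiv ℝ f) := hf.fderiv_right (by norm_cast)
  have hw : ContDiff ℝ (⊤ : ℕ∞) (fun y => v y - v x) := hv.sub contDiff_const
  have hA : ContDiff ℝ (⊤ : ℕ∞) (fun y => fderiv ℝ f y (v x)) := hdf.clm_apply contDiff_const
  have hB : ContDiff ℝ (⊤ : ℕ∞) (fun y => fderiv ℝ f y (v y)) := hdf.clm_apply hv
  have hT : ∀ M : ℕ, (M : WithTop ℕ∞) ≤ ((⊤ : ℕ∞) : WithTop ℕ∞) := fun M => by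
    exact_mod_cast le_top
  have hN := hT N
  rw [fderiv_iter_apply hf, ← iteratedFDeriv_sub_apply (hA.contDiffAt.of_le hN)
    (hB.contDiffAt.of_le hN), ← norm_neg, ← iteratedFDeriv_neg_apply]
  have e : (-((fun y => fderiv ℝ f y (v x)) - fun y => fderiv ℝ f y (v y)))
      = fun y => (ContinuousLinearMap.id ℝ (V3 →L[ℝ] E) (fderiv ℝ f y)) (v y - v x) := by
    funext y
    simp
  rw [e]
  have h := ContinuousLinearMap.norm_iteratedFDeriv_le_of_bilinear_of_le_one
    (ContinuousLinearMap.id ℝ (V3 →L[ℝ] E)) hdf hw x hN ContinuousLinearMap.norm_id_le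
  refine h.trans ?_
  rw [Finset.sum_range_succ]
  have hlast : ‖iteratedFDeriv ℝ (N - N) (fun y => v y - v x) x‖ = 0 := by
    rw [Nat.sub_self, norm_iteratedFDeriv_zero, sub_self, norm_zero]
  rw [hlast, mul_zero, add_zero]
  refine le_of_eq (Finset.sum_congr rfl fun i hi => ?_)
  have hi' : N - i ≠ 0 := by have := Finset.mem_range.1 hi; omega
  have hk := hT (N - i)
  have e2 : iteratedFDeriv ℝ (N - i) (fun y => v y - v x) x = iteratedFDeriv ℝ (N - i) v x := by
    have := iteratedFDeriv_sub_apply (x := x) (hv.contDiffAt.of_le hk)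
      ((contDiff_const (c := v x)).contDiffAt (x := x) (n := ((N - i : ℕ) : WithTop ℕ∞)) (𝕜 := ℝ))
    rw [iteratedFDeriv_const_of_ne hi'] at this
    rw [Pi.zero_apply, sub_zero] at this
    exact this
  rw [e2, norm_iteratedFDeriv_fderiv]

/-! ### Interpolation -/

/-- The Landau–Kolmogorov inequality for consecutive derivatives. -/
theorem landau {F : ℝ → V3 → E} (hF : SmoothST F) (hp : ∀ t, Per (F t)) (k : ℕ) (s : ℝ) :
    semiJ (k + 1) (F s) ^ 2 ≤ 8 * (semiJ k (F s) * semiJ (k + 2) (F s)) := by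
  set M0 := semiJ k (F s)
  set M1 := semiJ (k + 1) (F s) with hM1
  set M2 := semiJ (k + 2) (F s)
  have hM0' : 0 ≤ M0 := semiJ_nonneg _ _
  have hM1' : 0 ≤ M1 := semiJ_nonneg _ _
  have hM2' : 0 ≤ M2 := semiJ_nonneg _ _
  have step : ∀ ρ : ℝ, 0 < ρ → M1 * ρ ≤ 2 * M0 + M2 * (ρ * ρ) := by
    intro ρ hρ
    rw [← le_div_iff₀ hρ]
    refine semiJ_le fun x => ?_
    rw [← norm_fderiv_iteratedFDeriv]
    refine ContinuousLinearMap.opNorm_le_bound _ (by positivity) fun w => ?_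
    rcases eq_or_ne w 0 with rfl | hw
    · simp
    have hw' : 0 < ‖w‖ := norm_pos_iff.2 hw
    set r := ρ / ‖w‖ with hr
    have hr0 : 0 < r := by positivity
    have hrw : ‖r • w‖ = ρ := by
      rw [norm_smul, Real.norm_of_nonneg hr0.le, hr]; field_simp
    have h := Convex.norm_image_sub_le_of_norm_hasFDerivWithin_le' (x := x)
      (y := x + r • w) (s := Metric.closedBall x ρ) (C := M2 * ρ)
      (φ := fderiv ℝ (iteratedFDeriv ℝ k (F s)) x)
      (fun z _ => (hasFDerivAt_iter hF k s z).hasFDerivWithinAt) (fun z hz => by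
        rw [norm_fderiv_iter_sub]
        refine (iter_lipschitz hF hp (k + 1) s z x).trans ?_
        exact mul_le_mul_of_nonneg_left (by simpa [dist_eq_norm] using hz) hM2')
      (convex_closedBall x ρ)
      (Metric.mem_closedBall_self hρ.le) (by simp [dist_eq_norm, hrw])
    rw [add_sub_cancel_left, hrw, map_smul] at h
    set A := iteratedFDeriv ℝ k (F s) (x + r • w)
    set B := iteratedFDeriv ℝ k (F s) x
    set D := fderiv ℝ (iteratedFDeriv ℝ k (F s)) x w
    have h2 : ‖r • D‖ ≤ 2 * M0 + M2 * ρ * ρ := by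
      have e : r • D = A - B - (A - B - r • D) := by abel
      rw [e]
      refine (norm_sub_le _ _).trans (add_le_add ?_ h)
      refine (norm_sub_le _ _).trans ?_
      linarith [le_semiJ hF hp k s (x + r • w), le_semiJ hF hp k s x]
    rw [norm_smul, Real.norm_of_nonneg hr0.le, hr] at h2
    rw [div_mul_eq_mul_div, le_div_iff₀ hρ]
    rw [div_mul_eq_mul_div, div_le_iff₀ hw'] at h2
    linarith
  have hq : ∀ ρ : ℝ, 0 ≤ M2 * (ρ * ρ) + (-M1) * ρ + 2 * M0 := by
    intro ρ
    rcases le_or_gt ρ 0 with h | h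
    · have : 0 ≤ M1 * (-ρ) := mul_nonneg hM1' (by linarith)
      have : 0 ≤ M2 * (ρ * ρ) := mul_nonneg hM2' (mul_self_nonneg _)
      linarith
    · linarith [step ρ h]
  have hd := discrim_le_zero hq
  rw [discrim] at hd
  nlinarith

/-- A nonnegative sequence that is log-convex up to a constant is bounded by its end values:
the weights `9 ^ k²` make it strictly log-convex, so a positive maximum is not attained inside. -/
theorem logconvex_le {P : ℕ → ℝ} {n : ℕ} (h0 : ∀ k, 0 ≤ P k)
    (h : ∀ k, k + 2 ≤ n → P (k + 1) ^ 2 ≤ 64 * (P k * P (k + 2))) :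
    ∀ k ≤ n, P k ≤ 9 ^ (n ^ 2) * (P 0 + P n) := by
  set Q : ℕ → ℝ := fun k => 9 ^ (k ^ 2) * P k with hQ
  have hQ0 : ∀ k, 0 ≤ Q k := fun k => mul_nonneg (by positivity) (h0 k)
  obtain ⟨m, hm, hmax⟩ := Finset.exists_max_image (Finset.range (n + 1)) Q ⟨0, by simp⟩
  have hmn : m ≤ n := by have := Finset.mem_range.1 hm; omega
  have hPQ : ∀ k ≤ n, P k ≤ Q m := fun k hk => by
    refine le_trans ?_ (hmax k (by simp; omega))
    exact le_mul_of_one_le_left (h0 k) (one_le_pow₀ (by norm_num))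
  intro k hk
  refine (hPQ k hk).trans ?_
  have hone : (1 : ℝ) ≤ 9 ^ (n ^ 2) := one_le_pow₀ (by norm_num)
  rcases Nat.eq_zero_or_pos m with rfl | hpos
  · have e : Q 0 = P 0 := by simp [hQ]
    rw [e]
    nlinarith [h0 0, h0 n]
  rcases Nat.lt_or_ge m n with hlt | hge
  · obtain ⟨j, rfl⟩ : ∃ j, m = j + 1 := ⟨m - 1, by omega⟩
    have hj := h j (by omega)
    have h1 := hmax j (by simp; omega)
    have h2 := hmax (j + 2) (by simp; omega)
    have e : 81 * Q (j + 1) ^ 2 ≤ 64 * (Q j * Q (j + 2)) := by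
      have e1 : 81 * Q (j + 1) ^ 2 = 9 ^ (j ^ 2 + (j + 2) ^ 2) * P (j + 1) ^ 2 := by
        simp only [hQ, mul_pow, ← pow_mul]
        rw [← mul_assoc]
        congr 1
        rw [show (81 : ℝ) = 9 ^ 2 by norm_num, ← pow_add]
        congr 1; ring
      have e2 : Q j * Q (j + 2) = 9 ^ (j ^ 2 + (j + 2) ^ 2) * (P j * P (j + 2)) := by
        simp only [hQ, pow_add]; ring
      rw [e1, e2]
      nlinarith [pow_pos (show (0 : ℝ) < 9 by norm_num) (j ^ 2 + (j + 2) ^ 2)]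
    have h3 : Q j * Q (j + 2) ≤ Q (j + 1) * Q (j + 1) := mul_le_mul h1 h2 (hQ0 _) (hQ0 _)
    have hz : Q (j + 1) = 0 := by nlinarith [hQ0 (j + 1)]
    rw [hz]
    have := h0 0; have := h0 n
    positivity
  · obtain rfl : m = n := by omega
    simp only [hQ]
    have := h0 0
    gcongr
    linarith

/-- The constant in the commutator estimate. -/
def commC (N : ℕ) : ℝ := 2 ^ N * 9 ^ ((N - 1) ^ 2)

theorem commC_nonneg (N : ℕ) : 0 ≤ commC N := by unfold commC; positivity

theorem commutator_semiJ (hf : SmoothST f) (hpf : ∀ t, Per (f t)) (hv : SmoothST v)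
    (hpv : ∀ t, Per (v t)) {N : ℕ} (hN : 1 ≤ N) (s : ℝ) (x : V3) :
    ‖fderiv ℝ (iteratedFDeriv ℝ N (f s)) x (v s x)
        - iteratedFDeriv ℝ N (fun y => fderiv ℝ (f s) y (v s y)) x‖
      ≤ commC N * (semiJ N (v s) * semiJ 1 (f s) + semiJ 1 (v s) * semiJ N (f s)) := by
  set P : ℕ → ℝ := fun k => semiJ (k + 1) (f s) * semiJ (N - k) (v s) with hP
  have hP0 : ∀ k, 0 ≤ P k := fun k => mul_nonneg (semiJ_nonneg _ _) (semiJ_nonneg _ _)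
  have hlc := logconvex_le (P := P) (n := N - 1) hP0 (fun k hk => by
    obtain ⟨m, rfl⟩ : ∃ m, N = k + 3 + m := ⟨N - (k + 3), by omega⟩
    have h1 := landau hf hpf (k + 1) s
    have h2 := landau hv hpv (m + 1) s
    simp only [hP]
    rw [show k + 3 + m - (k + 1) = m + 1 + 1 by omega, show k + 3 + m - k = m + 1 + 2 by omega,
      show k + 3 + m - (k + 2) = m + 1 by omega, mul_pow]
    calc _ ≤ (8 * (semiJ (k + 1) (f s) * semiJ (k + 1 + 2) (f s))) *
          (8 * (semiJ (m + 1) (v s) * semiJ (m + 1 + 2) (v s))) :=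
            mul_le_mul h1 h2 (sq_nonneg _) ((sq_nonneg _).trans h1)
      _ = _ := by
        rw [show k + 2 + 1 = k + 1 + 2 by omega]; ring)
  have hend : P 0 + P (N - 1)
      = semiJ N (v s) * semiJ 1 (f s) + semiJ 1 (v s) * semiJ N (f s) := by
    simp only [hP]
    rw [show N - 1 + 1 = N by omega, show N - (N - 1) = 1 by omega, Nat.sub_zero, zero_add]
    ring
  rw [hend] at hlc
  set R := semiJ N (v s) * semiJ 1 (f s) + semiJ 1 (v s) * semiJ N (f s)
  have hR : 0 ≤ R := by rw [← hend]; exact add_nonneg (hP0 _) (hP0 _)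
  refine (commutator_le (smooth_slice hf s) (smooth_slice hv s) N x).trans ?_
  calc _ ≤ ∑ i ∈ Finset.range N, (N.choose i : ℝ) * (9 ^ ((N - 1) ^ 2) * R) := by
        refine Finset.sum_le_sum fun i hi => ?_
        rw [mul_assoc]
        refine mul_le_mul_of_nonneg_left ?_ (Nat.cast_nonneg _)
        refine le_trans ?_ (hlc i (by have := Finset.mem_range.1 hi; omega))
        exact mul_le_mul (le_semiJ hf hpf _ s x) (le_semiJ hv hpv _ s x) (norm_nonneg _)
          (semiJ_nonneg _ _)
    _ ≤ ∑ i ∈ Finset.range (N + 1), (N.choose i : ℝ) * (9 ^ ((N - 1) ^ 2) * R) := by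
        refine Finset.sum_le_sum_of_subset_of_nonneg (Finset.range_mono (by omega)) ?_
        intro i _ _
        positivity
    _ = commC N * R := by
        rw [← Finset.sum_mul, commC]
        have : (∑ i ∈ Finset.range (N + 1), (N.choose i : ℝ)) = 2 ^ N := by
          exact_mod_cast Nat.sum_range_choose N
        rw [this, mul_assoc]

end

/-! ### Integral inequalities -/

section

theorem hasDerivAt_primitive {h : ℝ → ℝ} (hh : Continuous h) (a s : ℝ) :
    HasDerivAt (fun s => ∫ r in a..s, h r) (h s) s :=
  intervalIntegral.integral_hasDerivAt_right (hh.intervalIntegrable _ _)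
    (hh.stronglyMeasurableAtFilter _ _) hh.continuousAt

theorem norm_le_add_integral {E : Type} [NormedAddCommGroup E] [NormedSpace ℝ E] {G G' : ℝ → E}
    {φ : ℝ → ℝ} {a b : ℝ} (hab : a ≤ b) (hG : ∀ r ∈ Set.Icc a b, HasDerivAt G (G' r) r)
    (hφ : Continuous φ) (h : ∀ r ∈ Set.Icc a b, ‖G' r‖ ≤ φ r) :
    ‖G b‖ ≤ ‖G a‖ + ∫ r in a..b, φ r := by
  refine image_norm_le_of_norm_deriv_right_le_deriv_boundary (f := G) (f' := G')
    (B := fun s => ‖G a‖ + ∫ r in a..s, φ r) (B' := φ)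
    (fun s hs => (hG s hs).continuousAt.continuousWithinAt)
    (fun s hs => (hG s ⟨hs.1, hs.2.le⟩).hasDerivWithinAt) (by simp)
    (fun s => (hasDerivAt_primitive hφ a s).const_add _)
    (fun s hs => h s ⟨hs.1, hs.2.le⟩) (Set.right_mem_Icc.2 hab)

/-- Grönwall's inequality in integral form with a forcing term. -/
theorem gronwall {u q : ℝ → ℝ} (hu : Continuous u) (hq : Continuous q) (hq0 : ∀ s, 0 ≤ q s)
    {κ A a b : ℝ} (hκ : 0 ≤ κ) (hab : a ≤ b)
    (h : ∀ s ∈ Set.Icc a b, u s ≤ A + ∫ r in a..s, (q r + κ * u r)) :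
    u b ≤ Real.exp (κ * (b - a)) * (A + ∫ r in a..b, q r) := by
  set W : ℝ → ℝ := fun s => A + ∫ r in a..s, (q r + κ * u r) with hW
  have hqu : Continuous (fun r => q r + κ * u r) := hq.add (hu.const_mul κ)
  have hWd : ∀ s, HasDerivAt W (q s + κ * u s) s := fun s =>
    (hasDerivAt_primitive hqu a s).const_add _
  have hed : ∀ s, HasDerivAt (fun s => Real.exp (-(κ * (s - a))))
      (Real.exp (-(κ * (s - a))) * (-κ)) s := fun s => by
    have h1 : HasDerivAt (fun s : ℝ => -(κ * (s - a))) (-(κ * 1)) s :=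
      (((hasDerivAt_id s).sub_const a).const_mul κ).neg
    rw [mul_one] at h1
    exact h1.exp
  set Z : ℝ → ℝ := fun s => Real.exp (-(κ * (s - a))) * W s - (A + ∫ r in a..s, q r) with hZ
  have hZd : ∀ s, HasDerivAt Z (Real.exp (-(κ * (s - a))) * (-κ) * W s
      + Real.exp (-(κ * (s - a))) * (q s + κ * u s) - q s) s := fun s =>
    ((hed s).mul (hWd s)).sub ((hasDerivAt_primitive hq a s).const_add _)
  have hanti : AntitoneOn Z (Set.Icc a b) := by
    refine antitoneOn_of_deriv_nonpos (convex_Icc a b)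
      (fun s _ => (hZd s).continuousAt.continuousWithinAt)
      (fun s _ => (hZd s).differentiableAt.differentiableWithinAt) (fun s hs => ?_)
    rw [interior_Icc] at hs
    rw [(hZd s).deriv]
    have h1 := h s ⟨hs.1.le, hs.2.le⟩
    have he0 : 0 < Real.exp (-(κ * (s - a))) := Real.exp_pos _
    have he1 : Real.exp (-(κ * (s - a))) ≤ 1 := by
      rw [Real.exp_le_one_iff]
      have := mul_nonneg hκ (sub_nonneg.2 hs.1.le)
      linarith
    have h2 : 0 ≤ Real.exp (-(κ * (s - a))) * (κ * (W s - u s)) :=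
      mul_nonneg he0.le (mul_nonneg hκ (sub_nonneg.2 h1))
    have h3 : Real.exp (-(κ * (s - a))) * q s ≤ 1 * q s :=
      mul_le_mul_of_nonneg_right he1 (hq0 s)
    linarith
  have hZb := hanti (Set.left_mem_Icc.2 hab) (Set.right_mem_Icc.2 hab) hab
  have hZa : Z a = 0 := by simp [hZ, hW]
  rw [hZa] at hZb
  simp only [hZ] at hZb
  refine (h b (Set.right_mem_Icc.2 hab)).trans ?_
  change W b ≤ _
  rw [Real.exp_neg] at hZb
  have hp := Real.exp_pos (κ * (b - a))
  rw [sub_nonpos, inv_mul_le_iff₀ hp] at hZb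
  exact hZb

theorem integral_primitive {h : ℝ → ℝ} (hh : Continuous h) (a b : ℝ) :
    ∫ r in a..b, (∫ τ in a..r, h τ) = ∫ τ in a..b, (b - τ) * h τ := by
  have h1 := intervalIntegral.integral_mul_deriv_eq_deriv_mul (a := a) (b := b)
    (u := fun r => ∫ τ in a..r, h τ) (u' := h) (v := fun r => r - b) (v' := fun _ => 1)
    (fun r _ => hasDerivAt_primitive hh a r) (fun r _ => (hasDerivAt_id r).sub_const b)
    (hh.intervalIntegrable _ _) (continuous_const.intervalIntegrable _ _)
  simp only [mul_one, sub_self, mul_zero, intervalIntegral.integral_same, zero_mul, zero_sub] at h1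
  rw [h1, ← intervalIntegral.integral_neg]
  congr 1
  funext τ
  ring

end

/-! ### Higher derivatives -/

section
variable {E : Type} [NormedAddCommGroup E] [NormedSpace ℝ E] {v : ℝ → V3 → V3} {f g : ℝ → V3 → E}

/-- `D^N f` solves a transport equation whose forcing is `D^N g` plus the commutator;
integrating it along characteristics bounds `[f(s)]_N`. -/
theorem semiJ_integral_ineq (hv : SmoothST v) (hf : SmoothST f) (hg : SmoothST g)
    (hpv : ∀ t, Per (v t)) (hpf : ∀ t, Per (f t)) (hpg : ∀ t, Per (g t))
    (heq : ∀ s x, deriv (fun r => f r x) s + fderiv ℝ (f s) x (v s x) = g s x)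
    {N : ℕ} (hN : 1 ≤ N) {a b s : ℝ} (hs : s ∈ Set.Icc a b) :
    semiJ N (f s) ≤ semiJ N (f a) + ∫ r in a..s, (semiJ N (g r)
      + commC N * (tSemiJ (Set.Icc a b) N v * semiJ 1 (f r)
        + tSemiJ (Set.Icc a b) 1 v * semiJ N (f r))) := by
  refine semiJ_le fun x => ?_
  obtain ⟨γ, hγs, hγ⟩ := exists_curve hv hpv (Set.right_mem_Icc.2 hs.1) x
  have hd : ∀ r ∈ Set.Icc a s, HasDerivAt (fun r => iteratedFDeriv ℝ N (f r) (γ r))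
      (iteratedFDeriv ℝ N (g r) (γ r) + (fderiv ℝ (iteratedFDeriv ℝ N (f r)) (γ r) (v r (γ r))
        - iteratedFDeriv ℝ N (fun y => fderiv ℝ (f r) y (v r y)) (γ r))) r := by
    intro r hr
    have h := hasDerivAt_along (smooth_iter N hf) (hγ r hr)
    rw [time_deriv_iter N hf] at h
    have hdt : (fun y => deriv (fun r => f r y) r)
        = g r - fun y => fderiv ℝ (f r) y (v r y) := by
      funext y
      rw [Pi.sub_apply, ← heq r y, add_sub_cancel_right]
    have hT : (N : WithTop ℕ∞) ≤ ((⊤ : ℕ∞) : WithTop ℕ∞) := by exact_mod_cast le_top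
    have hA : ContDiff ℝ (⊤ : ℕ∞) (fun y => fderiv ℝ (f r) y (v r y)) :=
      ((smooth_slice hf r).fderiv_right (by norm_cast)).clm_apply (smooth_slice hv r)
    rw [hdt, iteratedFDeriv_sub_apply ((smooth_slice hg r).contDiffAt.of_le hT)
      (hA.contDiffAt.of_le hT)] at h
    exact h.congr_deriv (by rw [sub_add_eq_add_sub, add_sub_assoc])
  have hcont : Continuous (fun r => semiJ N (g r)
      + commC N * (tSemiJ (Set.Icc a b) N v * semiJ 1 (f r)
        + tSemiJ (Set.Icc a b) 1 v * semiJ N (f r))) :=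
    (semiJ_continuous hg hpg N).add ((((semiJ_continuous hf hpf 1).const_mul _).add
      ((semiJ_continuous hf hpf N).const_mul _)).const_mul _)
  have h := norm_le_add_integral hs.1 hd hcont (fun r hr => by
    have hr' : r ∈ Set.Icc a b := ⟨hr.1, hr.2.trans hs.2⟩
    refine (norm_add_le _ _).trans (add_le_add (le_semiJ hg hpg N r _) ?_)
    refine (commutator_semiJ hf hpf hv hpv hN r (γ r)).trans ?_
    refine mul_le_mul_of_nonneg_left ?_ (commC_nonneg N)
    exact add_le_add
      (mul_le_mul_of_nonneg_right (le_tSemiJ hv hpv N hr') (semiJ_nonneg _ _))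
      (mul_le_mul_of_nonneg_right (le_tSemiJ hv hpv 1 hr') (semiJ_nonneg _ _)))
  rw [hγs] at h
  exact h.trans (add_le_add (le_semiJ hf hpf N a _) le_rfl)

/-- The constant in the estimate of `[f(t)]_N`. -/
def highC (N : ℕ) : ℝ := Real.exp (commC N) * (1 + commC N * Real.exp (2 * commC 1))

theorem highC_pos (N : ℕ) : 0 < highC N := by
  have := commC_nonneg N
  unfold highC; positivity

/-- The bound for `[f(t)]_N` by data of order exactly `N`: Grönwall first for `[f]_1`, then for
`[f]_N` with `[v]_N [f]_1` treated as a forcing. -/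
theorem semiJ_transport (hv : SmoothST v) (hf : SmoothST f) (hg : SmoothST g)
    (hpv : ∀ t, Per (v t)) (hpf : ∀ t, Per (f t)) (hpg : ∀ t, Per (g t))
    (heq : ∀ s x, deriv (fun r => f r x) s + fderiv ℝ (f s) x (v s x) = g s x)
    {N : ℕ} (hN : 1 ≤ N) {a b : ℝ} (hab : a ≤ b)
    (hK : (b - a) * tSemiJ (Set.Icc a b) 1 v ≤ 1) :
    semiJ N (f b) ≤ highC N * (semiJ N (f a)
      + (b - a) * tSemiJ (Set.Icc a b) N v * semiJ 1 (f a)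
      + ∫ τ in a..b, (semiJ N (g τ)
        + (b - τ) * tSemiJ (Set.Icc a b) N v * semiJ 1 (g τ))) := by
  set K1 := tSemiJ (Set.Icc a b) 1 v with hK1
  set KN := tSemiJ (Set.Icc a b) N v with hKN
  have hK1' : 0 ≤ K1 := tSemiJ_nonneg _ _ _
  have hKN' : 0 ≤ KN := tSemiJ_nonneg _ _ _
  have cf := fun M => semiJ_continuous hf hpf M
  have cg := fun M => semiJ_continuous hg hpg M
  have hc1 := commC_nonneg 1
  have hcN := commC_nonneg N
  have hone : ∀ s ∈ Set.Icc a b, semiJ 1 (f s)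
      ≤ Real.exp (2 * commC 1) * (semiJ 1 (f a) + ∫ r in a..s, semiJ 1 (g r)) := by
    intro s hs
    have h := gronwall (u := fun s => semiJ 1 (f s)) (q := fun s => semiJ 1 (g s))
      (κ := 2 * commC 1 * K1) (A := semiJ 1 (f a)) (cf 1) (cg 1) (fun _ => semiJ_nonneg _ _)
      (by positivity) hs.1 (fun r hr => by
        refine (semiJ_integral_ineq hv hf hg hpv hpf hpg heq le_rfl
          (⟨hr.1, hr.2.trans hs.2⟩ : r ∈ Set.Icc a b)).trans (le_of_eq ?_)
        congr 2
        funext τ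
        ring)
    refine h.trans (mul_le_mul_of_nonneg_right (Real.exp_le_exp.2 ?_) ?_)
    · have h1 : (s - a) * K1 ≤ 1 :=
        (mul_le_mul_of_nonneg_right (by linarith [hs.2]) hK1').trans hK
      nlinarith
    · exact add_nonneg (semiJ_nonneg _ _)
        (intervalIntegral.integral_nonneg hs.1 fun _ _ => semiJ_nonneg _ _)
  set c1 := Real.exp (2 * commC 1) with hc1d
  have hc1p : 0 < c1 := Real.exp_pos _
  have h := gronwall (u := fun s => semiJ N (f s))
    (q := fun s => semiJ N (g s) + commC N * KN * semiJ 1 (f s))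
    (κ := commC N * K1) (A := semiJ N (f a)) (cf N) ((cg N).add ((cf 1).const_mul _))
    (fun s => add_nonneg (semiJ_nonneg _ _) (mul_nonneg (by positivity) (semiJ_nonneg _ _)))
    (by positivity) hab (fun r hr => by
      refine (semiJ_integral_ineq hv hf hg hpv hpf hpg heq hN hr).trans (le_of_eq ?_)
      congr 2
      funext τ
      ring)
  have hprim : Continuous (fun r => ∫ τ in a..r, semiJ 1 (g τ)) :=
    continuous_iff_continuousAt.2 fun r => (hasDerivAt_primitive (cg 1) a r).continuousAt
  set I := ∫ τ in a..b, (b - τ) * semiJ 1 (g τ) with hI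
  have hI0 : 0 ≤ I := intervalIntegral.integral_nonneg hab fun τ hτ =>
    mul_nonneg (by linarith [hτ.2]) (semiJ_nonneg _ _)
  have hu1 : ∫ r in a..b, semiJ 1 (f r) ≤ c1 * ((b - a) * semiJ 1 (f a) + I) := by
    have h1 : ∫ r in a..b, semiJ 1 (f r)
        ≤ ∫ r in a..b, c1 * (semiJ 1 (f a) + ∫ τ in a..r, semiJ 1 (g τ)) :=
      intervalIntegral.integral_mono_on hab ((cf 1).intervalIntegrable _ _)
        (((continuous_const.add hprim).const_mul c1).intervalIntegrable _ _) hone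
    rw [intervalIntegral.integral_const_mul, intervalIntegral.integral_add
      (continuous_const.intervalIntegrable _ _) (hprim.intervalIntegrable _ _),
      integral_primitive (cg 1), intervalIntegral.integral_const, smul_eq_mul] at h1
    exact h1
  rw [intervalIntegral.integral_add ((cg N).intervalIntegrable _ _)
    (((cf 1).const_mul _).intervalIntegrable _ _), intervalIntegral.integral_const_mul] at h
  have hsplit : ∫ τ in a..b, (semiJ N (g τ) + (b - τ) * KN * semiJ 1 (g τ))
      = (∫ τ in a..b, semiJ N (g τ)) + KN * I := by
    have hc : Continuous (fun τ => KN * ((b - τ) * semiJ 1 (g τ))) :=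
      ((continuous_const.sub continuous_id).mul (cg 1)).const_mul KN
    rw [hI, ← intervalIntegral.integral_const_mul, ← intervalIntegral.integral_add
      ((cg N).intervalIntegrable _ _) (hc.intervalIntegrable _ _)]
    congr 1
    funext τ
    ring
  rw [hsplit]
  set J := ∫ τ in a..b, semiJ N (g τ)
  have hJ0 : 0 ≤ J := intervalIntegral.integral_nonneg hab fun _ _ => semiJ_nonneg _ _
  have hu0 := semiJ_nonneg N (f a)
  have hw0 : 0 ≤ (b - a) * semiJ 1 (f a) := mul_nonneg (by linarith) (semiJ_nonneg _ _)
  have hexp : Real.exp (commC N * K1 * (b - a)) ≤ Real.exp (commC N) := by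
    refine Real.exp_le_exp.2 ?_
    nlinarith
  refine h.trans ?_
  have hS : commC N * KN * (∫ r in a..b, semiJ 1 (f r))
      ≤ commC N * KN * (c1 * ((b - a) * semiJ 1 (f a) + I)) :=
    mul_le_mul_of_nonneg_left hu1 (by positivity)
  calc _ ≤ Real.exp (commC N) * (semiJ N (f a) + (J
        + commC N * KN * (c1 * ((b - a) * semiJ 1 (f a) + I)))) := by
        refine mul_le_mul hexp (by linarith) ?_ (Real.exp_pos _).le
        exact add_nonneg hu0 (add_nonneg hJ0 (mul_nonneg (by positivity)
          (intervalIntegral.integral_nonneg hab fun _ _ => semiJ_nonneg _ _)))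
    _ ≤ Real.exp (commC N) * ((1 + commC N * c1)
        * (semiJ N (f a) + KN * ((b - a) * semiJ 1 (f a)) + (J + KN * I))) := by
        refine mul_le_mul_of_nonneg_left ?_ (Real.exp_pos _).le
        have e1 : 0 ≤ commC N * c1 * (semiJ N (f a) + J) := by positivity
        have e2 : 0 ≤ KN * ((b - a) * semiJ 1 (f a)) + KN * I := by positivity
        linarith
    _ = _ := by rw [highC]; ring

end

/-! ### Hölder estimates -/

section
variable {v : ℝ → V3 → V3} {f g : ℝ → V3 → ℝ}

theorem semiJ_zero_transport (hv : SmoothST v) (hf : SmoothST f) (hg : SmoothST g)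
    (hpv : ∀ t, Per (v t)) (hpf : ∀ t, Per (f t)) (hpg : ∀ t, Per (g t))
    (heq : ∀ s x, deriv (fun r => f r x) s + fderiv ℝ (f s) x (v s x) = g s x)
    {a b : ℝ} (hab : a ≤ b) :
    semiJ 0 (f b) ≤ semiJ 0 (f a) + ∫ τ in a..b, semiJ 0 (g τ) := by
  refine semiJ_le fun x => ?_
  obtain ⟨γ, hγb, hγ⟩ := exists_curve hv hpv (Set.right_mem_Icc.2 hab) x
  have h := norm_le_add_integral hab (fun r hr => deriv_along hf heq (hγ r hr))
    (semiJ_continuous hg hpg 0) (fun r _ => by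
      rw [← norm_iteratedFDeriv_zero (𝕜 := ℝ)]
      exact le_semiJ hg hpg 0 r _)
  rw [hγb] at h
  rw [norm_iteratedFDeriv_zero]
  refine h.trans (add_le_add ?_ le_rfl)
  rw [← norm_iteratedFDeriv_zero (𝕜 := ℝ)]
  exact le_semiJ hf hpf 0 a _

/-- The difference of the solution along two characteristics, which stay within a factor
`e` of their final distance. -/
theorem semiH_zero_transport (hv : SmoothST v) (hf : SmoothST f) (hg : SmoothST g)
    (hpv : ∀ t, Per (v t)) (hpf : ∀ t, Per (f t)) (hpg : ∀ t, Per (g t))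
    (heq : ∀ s x, deriv (fun r => f r x) s + fderiv ℝ (f s) x (v s x) = g s x)
    {a b : ℝ} (hab : a ≤ b) (hK : (b - a) * tSemiJ (Set.Icc a b) 1 v ≤ 1) {α : ℝ}
    (h0 : 0 ≤ α) (h1 : α ≤ 1) :
    semiH 0 α (f b) ≤ Real.exp 1 * (semiH 0 α (f a) + ∫ τ in a..b, semiH 0 α (g τ)) := by
  have hI : 0 ≤ ∫ τ in a..b, semiH 0 α (g τ) :=
    intervalIntegral.integral_nonneg hab fun _ _ => semiH_nonneg _ _ _
  have hH : 0 ≤ Real.exp 1 * (semiH 0 α (f a) + ∫ τ in a..b, semiH 0 α (g τ)) :=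
    mul_nonneg (Real.exp_pos _).le (add_nonneg (semiH_nonneg _ _ _) hI)
  refine ciSup_le fun x => ciSup_le fun y => ?_
  refine div_le_of_le_mul₀ (Real.rpow_nonneg (norm_nonneg _) _) hH ?_
  rw [iter_zero_sub]
  obtain ⟨γ, hγb, hγ⟩ := exists_curve hv hpv (Set.right_mem_Icc.2 hab) x
  obtain ⟨δ, hδb, hδ⟩ := exists_curve hv hpv (Set.right_mem_Icc.2 hab) y
  set D : ℝ := Real.exp 1 * ‖x - y‖ ^ α
  have hdist : ∀ r ∈ Set.Icc a b, ‖γ r - δ r‖ ^ α ≤ D := by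
    intro r hr
    have h := curves_dist hv hpv hγ hδ hr
    rw [hγb, hδb] at h
    have hle : Real.exp (tSemiJ (Set.Icc a b) 1 v * (b - r)) ≤ Real.exp 1 := by
      refine Real.exp_le_exp.2 ?_
      have := mul_le_mul_of_nonneg_left (sub_le_sub_left hr.1 b)
        (tSemiJ_nonneg 1 (Set.Icc a b) v)
      linarith
    have h2 : ‖γ r - δ r‖ ≤ ‖x - y‖ * Real.exp 1 :=
      h.trans (mul_le_mul_of_nonneg_left hle (norm_nonneg _))
    refine (Real.rpow_le_rpow (norm_nonneg _) h2 h0).trans ?_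
    rw [Real.mul_rpow (norm_nonneg _) (Real.exp_pos _).le, mul_comm]
    refine mul_le_mul_of_nonneg_right ?_ (Real.rpow_nonneg (norm_nonneg _) _)
    exact Real.rpow_le_self_of_one_le (Real.one_le_exp (by norm_num)) h1
  have bound : ∀ {F : ℝ → V3 → ℝ}, SmoothST F → (∀ t, Per (F t)) → ∀ r ∈ Set.Icc a b,
      ‖F r (γ r) - F r (δ r)‖ ≤ semiH 0 α (F r) * D := by
    intro F hF hp r hr
    have h := le_semiH hF hp 0 h0 h1 r (γ r) (δ r)
    rw [iter_zero_sub] at h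
    exact h.trans (mul_le_mul_of_nonneg_left (hdist r hr) (semiH_nonneg _ _ _))
  have hcont : ∀ {η : ℝ → V3}, (∀ r ∈ Set.Icc a b, HasDerivAt η (v r (η r)) r) →
      ContinuousOn (fun r => g r (η r)) (Set.Icc a b) := fun {η} hη =>
    (ContDiff.continuous hg).comp_continuousOn (f := fun r => (r, η r))
      (continuousOn_id.prodMk fun r hr => (hη r hr).continuousAt.continuousWithinAt)
  have hftc := intervalIntegral.integral_eq_sub_of_hasDerivAt (a := a) (b := b)
    (f := fun r => f r (γ r) - f r (δ r)) (f' := fun r => g r (γ r) - g r (δ r))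
    (fun r hr => by
      rw [Set.uIcc_of_le hab] at hr
      exact (deriv_along hf heq (hγ r hr)).sub (deriv_along hf heq (hδ r hr)))
    (ContinuousOn.intervalIntegrable (by
      rw [Set.uIcc_of_le hab]
      exact (hcont hγ).sub (hcont hδ)))
  rw [hγb, hδb] at hftc
  have hI_bd := intervalIntegral.norm_integral_le_of_norm_le hab
    (f := fun r => g r (γ r) - g r (δ r)) (g := fun r => semiH 0 α (g r) * D)
    (Filter.Eventually.of_forall fun r hr => bound hg hpg r ⟨hr.1.le, hr.2⟩)
    ((semiH_intervalIntegrable hg hpg 0 h0 h1 a b).mul_const D)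
  rw [hftc, intervalIntegral.integral_mul_const] at hI_bd
  have ha := bound hf hpf a (Set.left_mem_Icc.2 hab)
  have e : f b x - f b y = (f b x - f b y - (f a (γ a) - f a (δ a)))
      + (f a (γ a) - f a (δ a)) := by ring
  rw [e]
  refine (norm_add_le _ _).trans ((add_le_add hI_bd ha).trans (le_of_eq ?_))
  simp only [D]
  ring

theorem cA_transport (hv : SmoothST v) (hf : SmoothST f) (hg : SmoothST g)
    (hpv : ∀ t, Per (v t)) (hpf : ∀ t, Per (f t)) (hpg : ∀ t, Per (g t))
    (heq : ∀ s x, deriv (fun r => f r x) s + fderiv ℝ (f s) x (v s x) = g s x)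
    {a b : ℝ} (hab : a ≤ b) (hK : (b - a) * tSemiJ (Set.Icc a b) 1 v ≤ 1) {α : ℝ}
    (h0 : 0 ≤ α) (h1 : α ≤ 1) :
    cA α (f b) ≤ Real.exp 1 * (cA α (f a) + ∫ τ in a..b, cA α (g τ)) := by
  have hz := semiJ_zero_transport hv hf hg hpv hpf hpg heq hab
  have he : (1 : ℝ) ≤ Real.exp 1 := Real.one_le_exp (by norm_num)
  have hI : 0 ≤ ∫ τ in a..b, semiJ 0 (g τ) :=
    intervalIntegral.integral_nonneg hab fun _ _ => semiJ_nonneg _ _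
  have hz' : semiJ 0 (f b) ≤ Real.exp 1 * (semiJ 0 (f a) + ∫ τ in a..b, semiJ 0 (g τ)) :=
    hz.trans (le_mul_of_one_le_left (add_nonneg (semiJ_nonneg _ _) hI) he)
  by_cases hα : α = 0
  · simp only [cA, hα, if_true, add_zero]
    exact hz'
  · have hh := semiH_zero_transport hv hf hg hpv hpf hpg heq hab hK h0 h1
    simp only [cA, hα, if_false]
    rw [intervalIntegral.integral_add ((semiJ_continuous hg hpg 0).intervalIntegrable _ _)
      (semiH_intervalIntegrable hg hpg 0 h0 h1 a b)]
    linarith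

end

/-! ### The inverse flow -/

section
variable {v : ℝ → V3 → V3} {X : V3 → ℝ → V3} {Φ : ℝ → V3 → V3} {t₀ : ℝ}

/-- The flow started at `t₀` from the value at `t₀` of a characteristic is that
characteristic. -/
theorem flow_eq_curve (hv : SmoothST v) (hpv : ∀ t, Per (v t)) (hX0 : ∀ x, X x t₀ = x)
    (hX : ∀ x s, HasDerivAt (X x) (v s (X x s)) s) {a b s : ℝ} (ht₀ : t₀ ∈ Set.Ioo a b)
    (hs : s ∈ Set.Ioo a b) {γ : ℝ → V3}
    (hγ : ∀ r ∈ Set.Icc a b, HasDerivAt γ (v r (γ r)) r) : X (γ t₀) s = γ s := by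
  refine ODE_solution_unique_of_mem_Ioo (v := v) (s := fun _ => Set.univ)
    (K := Real.toNNReal (tSemiJ (Set.Icc a b) 1 v)) (a := a) (b := b) (t₀ := t₀)
    (fun r hr => lipschitzOnWith_on hv hpv (Set.Ioo_subset_Icc_self hr) _) ht₀
    (fun r _ => ⟨hX _ r, Set.mem_univ _⟩)
    (fun r hr => ⟨hγ r (Set.Ioo_subset_Icc_self hr), Set.mem_univ _⟩) (hX0 _) hs

/-- `Φ s` is also a right inverse of the flow and commutes with integer translations: both
follow by reading off `Φ s y` as the value at `t₀` of a characteristic through `(s, y)`. -/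
theorem inverse_flow_eq (hv : SmoothST v) (hpv : ∀ t, Per (v t)) (hX0 : ∀ x, X x t₀ = x)
    (hX : ∀ x s, HasDerivAt (X x) (v s (X x s)) s) (hΦ : ∀ s x, Φ s (X x s) = x)
    (s : ℝ) (y : V3) : X (Φ s y) s = y ∧
      ∀ n : Fin 3 → ℤ, Φ s (y + fun i => (n i : ℝ)) = Φ s y + fun i => (n i : ℝ) := by
  set a := min t₀ s - 1
  set b := max t₀ s + 1
  have ht₀ : t₀ ∈ Set.Ioo a b :=
    ⟨by linarith [min_le_left t₀ s], by linarith [le_max_left t₀ s]⟩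
  have hs : s ∈ Set.Ioo a b :=
    ⟨by linarith [min_le_right t₀ s], by linarith [le_max_right t₀ s]⟩
  obtain ⟨γ, hγs, hγ⟩ := exists_curve hv hpv (Set.Ioo_subset_Icc_self hs) y
  have h1 := flow_eq_curve hv hpv hX0 hX ht₀ hs hγ
  have h2 : Φ s y = γ t₀ := by
    rw [← hγs, ← h1, hΦ]
  refine ⟨by rw [h2, h1, hγs], fun n => ?_⟩
  have h3 := flow_eq_curve hv hpv hX0 hX ht₀ hs (γ := fun r => γ r + fun i => (n i : ℝ))
    (fun r hr => by
      rw [hpv r (γ r) n]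
      exact (hγ r hr).add_const _)
  simp only [hγs] at h3
  rw [h2, ← h3, hΦ]

/-- The displacement `Φ - id` of the inverse flow is periodic, vanishes at `t₀` and is
transported by `v` with forcing `-v`, so `semiJ_transport` bounds its derivatives. -/
theorem displacement_est (hv : SmoothST v) (hpv : ∀ t, Per (v t)) (hX0 : ∀ x, X x t₀ = x)
    (hX : ∀ x s, HasDerivAt (X x) (v s (X x s)) s) (hΦ : ∀ s x, Φ s (X x s) = x)
    (hΦs : SmoothST Φ) {t : ℝ} (ht : t₀ ≤ t)
    (hK : (t - t₀) * tSemiJ (Set.Icc t₀ t) 1 v ≤ 1) {N : ℕ} (hN : 1 ≤ N) (x : V3) :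
    ‖iteratedFDeriv ℝ N (fun y => Φ t y - y) x‖
      ≤ 2 * highC N * (t - t₀) * tSemiJ (Set.Icc t₀ t) N v := by
  set ψ : ℝ → V3 → V3 := fun s y => Φ s y - y with hψ
  have hinv := inverse_flow_eq hv hpv hX0 hX hΦ
  have hψs : SmoothST ψ := ContDiff.sub hΦs contDiff_snd
  have hpψ : ∀ s, Per (ψ s) := fun s y n => by
    simp only [hψ]
    rw [(hinv s y).2 n]
    abel
  set w : ℝ → V3 → V3 := fun s y => -v s y with hw
  have hws : SmoothST w := ContDiff.neg hv
  have hpw : ∀ s, Per (w s) := fun s y n => by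
    simp only [hw]
    rw [hpv s y n]
  have hwJ : ∀ M s, semiJ M (w s) = semiJ M (v s) := fun M s => by
    unfold semiJ
    congr 1
    funext y
    have : w s = -v s := rfl
    rw [this, iteratedFDeriv_neg_apply, norm_neg]
  have heq : ∀ s y, deriv (fun r => ψ r y) s + fderiv ℝ (ψ s) y (v s y) = w s y := by
    intro s y
    have h := hasDerivAt_along hΦs (hX (Φ s y) s)
    have hc : (fun r => Φ r (X (Φ s y) r)) = fun _ => Φ s y := funext fun r => hΦ r _
    rw [hc, (hinv s y).1] at h
    have h0 := h.unique (hasDerivAt_const s (Φ s y))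
    have hf : fderiv ℝ (ψ s) y = fderiv ℝ (Φ s) y - ContinuousLinearMap.id ℝ V3 :=
      ((hasFDerivAt_slice hΦs s y).differentiableAt.hasFDerivAt.sub (hasFDerivAt_id y)).fderiv
    have hd : deriv (fun r => ψ r y) s = deriv (fun r => Φ r y) s := by
      simp only [hψ]
      exact deriv_sub_const (y)
    rw [hd, hf, sub_apply, ← add_sub_assoc, h0]
    simp [hw]
  have hz : ∀ M, semiJ M (ψ t₀) = 0 := by
    intro M
    have e : ψ t₀ = fun _ => (0 : V3) := by
      funext y
      have := hΦ t₀ y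
      rw [hX0] at this
      simp [hψ, this]
    refine le_antisymm (semiJ_le fun y => ?_) (semiJ_nonneg _ _)
    rw [e]
    simp
  have h := semiJ_transport hv hψs hws hpv hpψ hpw heq hN ht hK
  rw [hz, hz] at h
  simp only [hwJ] at h
  set K1 := tSemiJ (Set.Icc t₀ t) 1 v
  set KN := tSemiJ (Set.Icc t₀ t) N v
  have hKN : 0 ≤ KN := tSemiJ_nonneg _ _ _
  have cv := fun M => semiJ_continuous hv hpv M
  have hc : Continuous (fun τ => semiJ N (v τ) + (t - τ) * KN * semiJ 1 (v τ)) :=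
    (cv N).add (((continuous_const.sub continuous_id).mul_const KN).mul (cv 1))
  have hI : ∫ τ in t₀..t, (semiJ N (v τ) + (t - τ) * KN * semiJ 1 (v τ))
      ≤ ∫ _ in t₀..t, 2 * KN := by
    refine intervalIntegral.integral_mono_on ht (hc.intervalIntegrable _ _)
      (continuous_const.intervalIntegrable _ _) fun τ hτ => ?_
    have e1 : semiJ N (v τ) ≤ KN := le_tSemiJ hv hpv N hτ
    have e2 : (t - τ) * semiJ 1 (v τ) ≤ 1 :=
      (mul_le_mul (by linarith [hτ.1]) (le_tSemiJ hv hpv 1 hτ) (semiJ_nonneg _ _)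
        (by linarith)).trans hK
    nlinarith
  rw [intervalIntegral.integral_const, smul_eq_mul] at hI
  refine (le_semiJ hψs hpψ N t x).trans (h.trans ?_)
  have hD := highC_pos N
  calc _ ≤ highC N * (0 + (t - t₀) * KN * 0 + (t - t₀) * (2 * KN)) := by
        exact mul_le_mul_of_nonneg_left (by linarith) hD.le
    _ = _ := by ring

end

/-! ### Coordinates, norms and the identity map -/

section

theorem sum_pd (h : V3 → ℝ) (x w : V3) : fderiv ℝ h x w = ∑ j, w j * pd h j x := by
  conv_lhs => rw [pi_eq_sum_univ' w, map_sum]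
  refine Finset.sum_congr rfl fun j _ => ?_
  rw [map_smul, smul_eq_mul, pd]

theorem cA_nonneg {E : Type} [NormedAddCommGroup E] [NormedSpace ℝ E] (α : ℝ) (f : V3 → E) :
    0 ≤ cA α f := by
  unfold cA
  refine add_nonneg (semiJ_nonneg _ _) ?_
  split_ifs
  exacts [le_rfl, semiH_nonneg _ _ _]

theorem iter_displacement {Φ : ℝ → V3 → V3} (hΦ : SmoothST Φ) (t : ℝ) {N : ℕ} (hN : 2 ≤ N)
    (x : V3) : iteratedFDeriv ℝ N (Φ t) x = iteratedFDeriv ℝ N (fun y => Φ t y - y) x := by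
  obtain ⟨m, rfl⟩ : ∃ m, N = m + 2 := ⟨N - 2, by omega⟩
  have hid : iteratedFDeriv ℝ (m + 2) (fun y : V3 => y) x = 0 := by
    rw [← norm_eq_zero, ← norm_iteratedFDeriv_fderiv]
    have hc : fderiv ℝ (fun y : V3 => y) = fun _ => ContinuousLinearMap.id ℝ V3 :=
      funext fun y => fderiv_fun_id
    rw [hc, iteratedFDeriv_const_of_ne (by omega), Pi.zero_apply, norm_zero]
  have hT : ∀ M : ℕ, (M : WithTop ℕ∞) ≤ ((⊤ : ℕ∞) : WithTop ℕ∞) := fun M => by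
    exact_mod_cast le_top
  have h := iteratedFDeriv_sub_apply (x := x) ((smooth_slice hΦ t).contDiffAt.of_le (hT (m + 2)))
    (contDiff_id.contDiffAt (x := x) (n := ((m + 2 : ℕ) : WithTop ℕ∞)) (𝕜 := ℝ))
  change iteratedFDeriv ℝ (m + 2) (fun y => Φ t y - y) x
    = _ - iteratedFDeriv ℝ (m + 2) (fun y => y) x at h
  rw [h, hid, sub_zero]

end

/-- **Proposition E.1 (estimates for the transport equation).**
Let `f` solve `∂ₜf + v·∇f = g`, `f(·,t₀) = f₀`, with `v` smooth and periodic, and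
assume `|t−t₀|‖v‖₁ ≤ 1`. Then `‖f(t)‖_α ≤ C(‖f₀‖_α + ∫_{t₀}^t ‖g(τ)‖_α dτ)` for
`0 ≤ α ≤ 1`, and for `N ≥ 1`,
`[f(t)]_N ≲_N [f₀]_{N+α} + (t−t₀)[v]_{N+α}[f₀]₁ + ∫_{t₀}^t ([g(τ)]_N + (t−τ)[v]_N[g(τ)]₁)dτ`.
Moreover, if `Φ(·,t)` is the inverse of the flow `X` of `v` starting at time `t₀` at
the identity, then `‖∇Φ(t) − Id‖₀ ≤ C(t−t₀)[v]₁` and `[Φ(t)]_N ≲_N (t−t₀)[v]_N` for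
`N ≥ 2`. -/
theorem transport_estimates :
    ∃ C > (0:ℝ), ∃ CN : ℕ → ℝ,
    ∀ (v : ℝ → V3 → V3) (f g : ℝ → V3 → ℝ) (t₀ : ℝ) (f₀ : V3 → ℝ),
      SmoothST v → SmoothST f → SmoothST g →
      (∀ t, Per (v t)) → (∀ t, Per (f t)) → (∀ t, Per (g t)) →
      (∀ t x, deriv (fun s => f s x) t + (∑ j, v t x j * pd (f t) j x) = g t x) →
      (∀ x, f t₀ x = f₀ x) →
      ∀ t : ℝ, t₀ ≤ t → (t - t₀) * tN (Set.Icc t₀ t) 1 v ≤ 1 →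
      -- (1) the `C^α` estimate
      (∀ α : ℝ, 0 ≤ α → α ≤ 1 →
        cA α (f t) ≤ C * (cA α f₀ + ∫ τ in t₀..t, cA α (g τ))) ∧
      -- (2) the higher-derivative estimate
      (∀ N : ℕ, 1 ≤ N → ∀ α : ℝ, 0 ≤ α → α ≤ 1 →
        semiJ N (f t) ≤ CN N *
          (semiH N α f₀
            + (t - t₀) * tSemiH (Set.Icc t₀ t) N α v * semiJ 1 f₀
            + ∫ τ in t₀..t,
                (semiJ N (g τ) + (t - τ) * tSemiJ (Set.Icc t₀ t) N v * semiJ 1 (g τ)))) ∧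
      -- estimates on the inverse flow `Φ`
      (∀ (X : V3 → ℝ → V3) (Φ : ℝ → V3 → V3),
        (∀ x, X x t₀ = x) →
        (∀ x s, HasDerivAt (X x) (v s (X x s)) s) →
        (∀ s x, Φ s (X x s) = x) →
        SmoothST Φ →
        (⨆ x : V3, ‖fderiv ℝ (Φ t) x - ContinuousLinearMap.id ℝ V3‖)
            ≤ C * (t - t₀) * tSemiJ (Set.Icc t₀ t) 1 v ∧
        ∀ N : ℕ, 2 ≤ N →
          semiJ N (Φ t) ≤ CN N * (t - t₀) * tSemiJ (Set.Icc t₀ t) N v) := by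
  refine ⟨Real.exp 1 + 2 * highC 1, by have := highC_pos 1; positivity,
    fun N => 3 * highC N, ?_⟩
  intro v f g t₀ f₀ hv hf hg hpv hpf hpg heq₀ hf₀ t ht hK₀
  obtain rfl : f t₀ = f₀ := funext hf₀
  have heq : ∀ s x, deriv (fun r => f r x) s + fderiv ℝ (f s) x (v s x) = g s x := by
    intro s x
    rw [← heq₀ s x, ← sum_pd]
  have hK : (t - t₀) * tSemiJ (Set.Icc t₀ t) 1 v ≤ 1 :=
    (mul_le_mul_of_nonneg_left (tSemiJ_one_le_tN hv hpv ht) (by linarith)).trans hK₀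
  refine ⟨fun α h0 h1 => ?_, fun N hN α h0 h1 => ?_, fun X Φ hX0 hX hΦ hΦs => ⟨?_, ?_⟩⟩
  · refine (cA_transport hv hf hg hpv hpf hpg heq ht hK h0 h1).trans
      (mul_le_mul_of_nonneg_right (by linarith [highC_pos 1]) ?_)
    exact add_nonneg (cA_nonneg _ _)
      (intervalIntegral.integral_nonneg ht fun _ _ => cA_nonneg _ _)
  · have h := semiJ_transport hv hf hg hpv hpf hpg heq hN ht hK
    have hI : 0 ≤ ∫ τ in t₀..t,
        (semiJ N (g τ) + (t - τ) * tSemiJ (Set.Icc t₀ t) N v * semiJ 1 (g τ)) :=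
      intervalIntegral.integral_nonneg ht fun τ hτ => add_nonneg (semiJ_nonneg _ _)
        (mul_nonneg (mul_nonneg (by linarith [hτ.2]) (tSemiJ_nonneg _ _ _)) (semiJ_nonneg _ _))
    have e1 := semiJ_le_semiH hf hpf hN h0 h1 t₀
    have e2 : (t - t₀) * tSemiJ (Set.Icc t₀ t) N v * semiJ 1 (f t₀)
        ≤ (t - t₀) * (3 * tSemiH (Set.Icc t₀ t) N α v) * semiJ 1 (f t₀) :=
      mul_le_mul_of_nonneg_right (mul_le_mul_of_nonneg_left
        (tSemiJ_le_tSemiH hv hpv hN h0 h1 ht) (by linarith)) (semiJ_nonneg _ _)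
    refine h.trans ?_
    change _ ≤ 3 * highC N * _
    rw [mul_comm (3 : ℝ), mul_assoc (highC N)]
    exact mul_le_mul_of_nonneg_left (by linarith) (highC_pos N).le
  · have hKN : 0 ≤ (t - t₀) * tSemiJ (Set.Icc t₀ t) 1 v :=
      mul_nonneg (by linarith) (tSemiJ_nonneg _ _ _)
    refine ciSup_le fun x => ?_
    have h := displacement_est hv hpv hX0 hX hΦ hΦs ht hK le_rfl x
    have hd : fderiv ℝ (fun y => Φ t y - y) x = fderiv ℝ (Φ t) x - ContinuousLinearMap.id ℝ V3 :=
      ((hasFDerivAt_slice hΦs t x).differentiableAt.hasFDerivAt.sub (hasFDerivAt_id x)).fderiv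
    rw [norm_iteratedFDeriv_one, hd] at h
    refine h.trans ?_
    rw [mul_assoc, mul_assoc _ (t - t₀)]
    exact mul_le_mul_of_nonneg_right (by linarith [Real.exp_pos 1]) hKN
  · intro N hN
    have hKN : 0 ≤ (t - t₀) * tSemiJ (Set.Icc t₀ t) N v :=
      mul_nonneg (by linarith) (tSemiJ_nonneg _ _ _)
    refine semiJ_le fun x => ?_
    rw [iter_displacement hΦs t hN x]
    refine (displacement_est hv hpv hX0 hX hΦ hΦs ht hK (by omega) x).trans ?_
    rw [mul_assoc, mul_assoc _ (t - t₀)]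
    exact mul_le_mul_of_nonneg_right (by linarith [highC_pos N]) hKN
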